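/- Fix a ∈ ℤ and let b = max{2, |a|+1}. Assume θ ∈ Ḣ^b_⋄ and f ∈ Ḣ^{b−1}_⋄. Then the difference 𝕀_θ − ℒ between the linearized Navier–Stokes flow and the heat flow maps Ḣ^a_⋄ continuously into L²([0,T], Ḣ^{a+2}_⋄) (i.e., although 𝕀_θ and ℒ are each only 1-smoothing, their difference is 2-smoothing). -/

import Mathlib

open MeasureTheory Set
open scoped BigOperators

noncomputable section

namespace NS2D

/-- Nonzero Fourier frequencies of the 2D torus `Ω = 𝕋²`. -/
def Freq : Type := {k : ℤ × ℤ // k ≠ 0}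

/-- Squared Euclidean modulus `|k|²` of a frequency. -/
def knormSq (k : Freq) : ℝ := (k.1.1 : ℝ) ^ 2 + (k.1.2 : ℝ) ^ 2

/-- Eigenvalue `λ_k = 4π²|k|²` of the periodic Laplacian `−Δ`. -/
def lam (k : Freq) : ℝ := 4 * Real.pi ^ 2 * knormSq k

/-- A divergence-free mean-zero vector field `u ∈ Ḣ_⋄` (or, more generally, an
element of the scale `Ḣ^α_⋄`) on the torus is represented by its Fourier
coefficients `c k` along the orthonormal basis
`e_k(x) = |k|⁻¹ (k₂, −k₁) exp(2πi k·x)` of divergence-free fields. -/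
abbrev Coef : Type := Freq → ℂ

/-- Negation of a frequency. -/
def fneg (k : Freq) : Freq := ⟨-k.1, neg_ne_zero.mpr k.2⟩

/-- The conjugacy condition expressing that the coefficients `c` represent a
real-valued vector field (note `e_{−k} = − conj e_k`). -/
def IsReal (c : Coef) : Prop := ∀ k, c (fneg k) = - (starRingEnd ℂ) (c k)

/-- Squared homogeneous Sobolev norm `‖·‖²_{Ḣ^α} = Σ_k λ_k^α |c k|²`. -/
def hSq (α : ℝ) (c : Coef) : ℝ := ∑' k, lam k ^ α * ‖c k‖ ^ 2

/-- Homogeneous Sobolev norm `‖·‖_{Ḣ^α}`. -/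
def hN (α : ℝ) (c : Coef) : ℝ := Real.sqrt (hSq α c)

/-- Finiteness of the `Ḣ^α`-norm. -/
def FinH (α : ℝ) (c : Coef) : Prop := Summable fun k => lam k ^ α * ‖c k‖ ^ 2

/-- Membership in `Ḣ^α_⋄` (real-valued field with finite `Ḣ^α`-norm). -/
def MemH (α : ℝ) (c : Coef) : Prop := IsReal c ∧ FinH α c

/-- Membership in `Ḣ^∞_⋄ = C^∞(Ω)² ∩ Ḣ_⋄`: all Sobolev norms are finite. -/
def MemHinf (c : Coef) : Prop := ∀ α : ℝ, MemH α c

/-- Real `Ḣ^α` inner product `⟨·,·⟩_{Ḣ^α}` (for real-valued fields). -/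
def hInner (α : ℝ) (c d : Coef) : ℝ := ∑' k, lam k ^ α * (c k * (starRingEnd ℂ) (d k)).re

/-- The `L²` inner product. -/
def innerC (c d : Coef) : ℂ := ∑' k, c k * (starRingEnd ℂ) (d k)

/-- The unit vector `(k₂, −k₁)/|k|` spanning the divergence-free direction at
frequency `k`. -/
def evec (k : Freq) : ℝ × ℝ :=
  ((k.1.2 : ℝ) / Real.sqrt (knormSq k), -((k.1.1 : ℝ)) / Real.sqrt (knormSq k))

/-- Euclidean dot product on `ℝ²`. -/
def dotR (a b : ℝ × ℝ) : ℝ := a.1 * b.1 + a.2 * b.2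

/-- A frequency as a real vector. -/
def fvec (k : Freq) : ℝ × ℝ := ((k.1.1 : ℝ), (k.1.2 : ℝ))

/-- Fourier coefficients (along the basis `e_k`) of the Leray-projected
transport nonlinearity `B[u,v] = P[(u·∇)v]`:
`(B[u,v])^(k) · ē_k = 2πi Σ_{m+n=k, n≠0} c_m d_n (e_m·n)(e_n·e_k)`. -/
def Bc (c d : Coef) : Coef := fun k =>
  (((2 * Real.pi : ℝ) : ℂ) * Complex.I) *
    ∑' m : Freq,
      if h : k.1 - m.1 ≠ 0 then
        c m * d ⟨k.1 - m.1, h⟩ *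
          (((dotR (evec m) (fvec ⟨k.1 - m.1, h⟩) *
            dotR (evec ⟨k.1 - m.1, h⟩) (evec k) : ℝ)) : ℂ)
      else 0

/-- The Laplacian `Δ` acting on the scale: `(Δu)^(k) = −λ_k û(k)`. -/
def lapC (c : Coef) : Coef := fun k => -((lam k : ℝ) : ℂ) * c k

/-- Continuity of a trajectory `t ↦ u(t)`, `t ∈ [0,T]`, for the `Ḣ^α`-norm:
`u ∈ C([0,T], Ḣ^α_⋄)`. -/
def ContH (α : ℝ) (T : ℝ) (u : ℝ → Coef) : Prop :=
  ∀ t ∈ Icc (0:ℝ) T, ∀ ε > 0, ∃ δ > 0, ∀ s ∈ Icc (0:ℝ) T,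
    |s - t| < δ → hN α (u s - u t) < ε

/-- Membership `u ∈ L²([0,T], Ḣ^α_⋄)`. -/
def MemL2H (α : ℝ) (T : ℝ) (u : ℝ → Coef) : Prop :=
  (∀ t ∈ Ioc (0:ℝ) T, MemH α (u t)) ∧
    IntegrableOn (fun t => hSq α (u t)) (Ioc 0 T)

/-- `u` is a strong solution on `[0,T]` of the (Leray-projected) periodic 2D
Navier–Stokes equations `du/dt + νAu + B[u,u] = f`, `u(0) = θ`, posed in `Ḣ_⋄`:
the Fourier coefficients satisfy the corresponding system of ODEs on `(0,T]`,
the trajectory is continuous into `Ḣ¹_⋄` (in particular at `t = 0`), and lies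
in `L²([0,T], Ḣ²_⋄)`. -/
structure IsNSSol (ν : ℝ) (f : Coef) (T : ℝ) (θ : Coef) (u : ℝ → Coef) : Prop where
  init : u 0 = θ
  real : ∀ t ∈ Icc (0:ℝ) T, IsReal (u t)
  deriv : ∀ (k : Freq), ∀ t ∈ Ioc (0:ℝ) T,
    HasDerivAt (fun s => u s k)
      (f k - ((ν * lam k : ℝ) : ℂ) * u t k - Bc (u t) (u t) k) t
  contH1 : ContH 1 T u
  memL2H2 : MemL2H 2 T u

/-- `U` solves the linear parabolic equation
`dU/dt − νΔU + B[u₀, U] + B[U, u₁] = g`, `U(0) = ξ`, on `[0,T]`. -/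
structure IsLinPSol (ν : ℝ) (u₀ u₁ : ℝ → Coef) (g : ℝ → Coef) (T : ℝ) (ξ : Coef)
    (U : ℝ → Coef) : Prop where
  init : U 0 = ξ
  real : ∀ t ∈ Icc (0:ℝ) T, IsReal (U t)
  deriv : ∀ (k : Freq), ∀ t ∈ Ioc (0:ℝ) T,
    HasDerivAt (fun s => U s k)
      (g t k - ((ν * lam k : ℝ) : ℂ) * U t k - Bc (u₀ t) (U t) k - Bc (U t) (u₁ t) k) t

/-- `U = 𝕀_θ[ξ]` solves the linearisation of Navier–Stokes along the
trajectory `u₀`: `dU/dt − νΔU + B[u₀,U] + B[U,u₀] = 0`, `U(0) = ξ`. -/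
def IsLinSol (ν : ℝ) (u₀ : ℝ → Coef) (T : ℝ) (ξ : Coef) (U : ℝ → Coef) : Prop :=
  IsLinPSol ν u₀ u₀ (fun _ => 0) T ξ U

/-- The heat semigroup `S_t = e^{νtΔ}` on the scale `Ḣ^α_⋄`. -/
def heatS (ν t : ℝ) (c : Coef) : Coef := fun k =>
  ((Real.exp (-(ν * lam k * t)) : ℝ) : ℂ) * c k

/-- Duhamel representation of the solution of the periodic heat equation
`du/dt − νΔu = g`, `u(0) = h`. -/
def heatSol (ν : ℝ) (g : ℝ → Coef) (h : Coef) : ℝ → Coef := fun t k =>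
  ((Real.exp (-(ν * lam k * t)) : ℝ) : ℂ) *
    (h k + ∫ s in (0:ℝ)..t, ((Real.exp (ν * lam k * s) : ℝ) : ℂ) * g s k)

/-- Real-linearity of a map on the coefficient space. -/
def IsLinMap (Λ : Coef → Coef) : Prop :=
  (∀ c d, Λ (c + d) = Λ c + Λ d) ∧ ∀ (r : ℝ) (c : Coef), Λ (r • c) = r • Λ c

/-- `Λ` defines a compact (linear) operator `Ḣ^α_⋄ → Ḣ^β_⋄`: it is linear,
maps `Ḣ^α_⋄` into `Ḣ^β_⋄`, and the image of the `Ḣ^α`-unit ball is totally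
bounded for the `Ḣ^β`-norm. -/
def IsCompactOp (α β : ℝ) (Λ : Coef → Coef) : Prop :=
  IsLinMap Λ ∧ (∀ c, MemH α c → MemH β (Λ c)) ∧
    ∀ ε > 0, ∃ S : Finset Coef, ∀ c, MemH α c → hN α c ≤ 1 →
      ∃ s ∈ S, hN β (Λ c - s) < ε

/-- The index `a* = |a|+1` if `|a| ≤ 1`, `a* = |a|` if `|a| ≥ 2`. -/
def astar (a : ℤ) : ℤ := if |a| ≤ 1 then |a| + 1 else |a|

/-- `i`-th component of the unit vector `evec k`. -/
def evecC (i : Fin 2) (k : Freq) : ℝ := if i = 0 then (evec k).1 else (evec k).2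

/-- Fourier coefficients (over all of `ℤ²`) of the scalar component `u_i` of a
divergence-free field with coefficients `c`. -/
def compCoef (i : Fin 2) (c : Coef) : ℤ × ℤ → ℂ := fun n =>
  if h : n ≠ 0 then c ⟨n, h⟩ * ((evecC i ⟨n, h⟩ : ℝ) : ℂ) else 0

/-- Convolution: Fourier coefficients of a pointwise product of two scalar
functions. -/
def convC (F G : ℤ × ℤ → ℂ) : ℤ × ℤ → ℂ := fun n => ∑' m : ℤ × ℤ, F m * G (n - m)

/-- Squared homogeneous Sobolev norm of a scalar function given by its Fourier
coefficients over `ℤ²`. -/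
def hSqScalar (α : ℝ) (F : ℤ × ℤ → ℂ) : ℝ := ∑' k : Freq, lam k ^ α * ‖F k.1‖ ^ 2

/-- `‖u vᵀ‖²_{Ḣ^α} = Σ_{i,j=1}^2 ‖u_i v_j‖²_{Ḣ^α}`. -/
def hSqMat (α : ℝ) (c d : Coef) : ℝ :=
  ∑ i : Fin 2, ∑ j : Fin 2, hSqScalar α (convC (compCoef i c) (compCoef j d))

/-- The character `exp(2πi k·x)`. -/
def efun (k : Freq) (x : ℝ × ℝ) : ℂ :=
  Complex.exp ((((2 * Real.pi : ℝ)) : ℂ) * Complex.I *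
    ((k.1.1 : ℂ) * (x.1 : ℂ) + (k.1.2 : ℂ) * (x.2 : ℂ)))

/-- Pointwise evaluation of the `i`-th component of the field. -/
def evalComp (i : Fin 2) (c : Coef) (x : ℝ × ℝ) : ℂ :=
  ∑' k, c k * ((evecC i k : ℝ) : ℂ) * efun k x

/-- Supremum norm (`C⁰`-norm) of the field. -/
def c0N (c : Coef) : ℝ := ⨆ x : ℝ × ℝ, max ‖evalComp 0 c x‖ ‖evalComp 1 c x‖

/-- The partial derivative `∂_j` acting on divergence-free fields. -/
def pderiv (j : Fin 2) (c : Coef) : Coef := fun k =>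
  (((2 * Real.pi : ℝ) : ℂ) * Complex.I) *
    (if j = 0 then ((k.1.1 : ℤ) : ℂ) else ((k.1.2 : ℤ) : ℂ)) * c k

/-- `C¹`-norm of the field. -/
def c1N (c : Coef) : ℝ := c0N c + c0N (pderiv 0 c) + c0N (pderiv 1 c)

/-- Norm of the multiplier space `B^ℓ`: `C^ℓ(Ω)²` for `ℓ ≤ 1` and `Ḣ^ℓ` for
`ℓ ≥ 2`. -/
def bN (ℓ : ℕ) (c : Coef) : ℝ :=
  if ℓ = 0 then c0N c else if ℓ = 1 then c1N c else hN (ℓ : ℝ) c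

end NS2D

/-!
The difference `U - S_t ξ` solves the heat equation with zero initial value and force
`-(B[u, U] + B[U, u])`, which is of order one in `U`. By parabolic regularity `u` is bounded in
`Ḣ^b`, so the force in `Ḣ^{τ-1}` is controlled by `U` in `Ḣ^τ` for every `|τ| ≤ b`, in particular
for `τ = a` and `τ = a + 1`. With `τ = a`, the energy estimate and Grönwall's inequality bound `U`
in `L^∞([0,T], Ḣ^a) ∩ L²([0,T], Ḣ^{a+1})` by the norm of `ξ`. With `τ = a + 1`, the force is then
in `L²([0,T], Ḣ^a)`, and maximal `L²` regularity of the heat equation gains two derivatives on it.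
-/

namespace NS2D

open scoped ENNReal NNReal

/-! ### Frequencies -/

instance : Countable Freq := inferInstanceAs (Countable {k : ℤ × ℤ // k ≠ 0})

/-- The modulus `2π|k| = √λ_k` of the wave vector `2πk`. -/
def waveNum (k : Freq) : ℝ := √(lam k)

lemma one_le_knormSq (k : Freq) : 1 ≤ knormSq k := by
  obtain ⟨⟨k₁, k₂⟩, hk⟩ := k
  have hpos : 0 < k₁ ^ 2 + k₂ ^ 2 := by
    by_contra! hle
    have h₁ : k₁ = 0 := pow_eq_zero_iff two_ne_zero |>.mp (by nlinarith [sq_nonneg k₁])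
    have h₂ : k₂ = 0 := pow_eq_zero_iff two_ne_zero |>.mp (by nlinarith [sq_nonneg k₂])
    exact hk (Prod.ext h₁ h₂)
  simp only [knormSq]
  exact_mod_cast Int.add_one_le_iff.mpr hpos

lemma knormSq_le_lam (k : Freq) : knormSq k ≤ lam k := by
  have := one_le_knormSq k
  have := Real.pi_gt_three
  have : 1 ≤ 4 * Real.pi ^ 2 := by nlinarith
  exact le_mul_of_one_le_left (by linarith) this

lemma one_le_lam (k : Freq) : 1 ≤ lam k := (one_le_knormSq k).trans (knormSq_le_lam k)

lemma lam_pos (k : Freq) : 0 < lam k := one_pos.trans_le (one_le_lam k)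

lemma waveNum_pos (k : Freq) : 0 < waveNum k := Real.sqrt_pos.mpr (lam_pos k)

lemma waveNum_rpow_sq (k : Freq) (s : ℝ) : (waveNum k ^ s) ^ 2 = lam k ^ s := by
  rw [waveNum, ← Real.rpow_natCast, ← Real.rpow_mul (Real.sqrt_nonneg _), mul_comm,
    Real.rpow_mul (Real.sqrt_nonneg _), Real.rpow_natCast, Real.sq_sqrt (lam_pos k).le]

lemma waveNum_eq_norm (k : Freq) : waveNum k = 2 * Real.pi * ‖(⟨k.1.1, k.1.2⟩ : ℂ)‖ := by
  rw [waveNum, lam, show 4 * Real.pi ^ 2 * knormSq k = (2 * Real.pi) ^ 2 * knormSq k by ring,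
    Real.sqrt_mul (by positivity), Real.sqrt_sq (by positivity), Complex.norm_def,
    Complex.normSq_mk, knormSq, sq, sq]

lemma waveNum_le_add {k m n : Freq} (h : k.1 = m.1 + n.1) :
    waveNum k ≤ waveNum m + waveNum n := by
  have hsum : (⟨k.1.1, k.1.2⟩ : ℂ) = ⟨m.1.1, m.1.2⟩ + ⟨n.1.1, n.1.2⟩ := by
    rw [h]
    apply Complex.ext <;> simp
  simp only [waveNum_eq_norm]
  rw [hsum, ← mul_add]
  gcongr
  exact norm_add_le _ _

lemma lam_fneg (k : Freq) : lam (fneg k) = lam k := by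
  simp [lam, knormSq, fneg]

lemma waveNum_fneg (k : Freq) : waveNum (fneg k) = waveNum k := by
  rw [waveNum, lam_fneg, waveNum]

lemma dotR_sq_le (v w : ℝ × ℝ) : dotR v w ^ 2 ≤ (v.1 ^ 2 + v.2 ^ 2) * (w.1 ^ 2 + w.2 ^ 2) := by
  unfold dotR
  nlinarith [sq_nonneg (v.1 * w.2 - v.2 * w.1)]

lemma evec_sq_add_sq (k : Freq) : (evec k).1 ^ 2 + (evec k).2 ^ 2 = 1 := by
  have hpos : 0 < knormSq k := one_pos.trans_le (one_le_knormSq k)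
  simp only [evec, div_pow, Real.sq_sqrt hpos.le, neg_sq]
  rw [← add_div, div_eq_one_iff_eq hpos.ne', knormSq, add_comm]

/-- Incompressibility: `e_m · m = 0` turns `e_m · n` into `e_m · k`, so that the derivative in
`(u·∇)v` falls on the product. -/
lemma two_pi_mul_abs_symbol_le {k m n : Freq} (h : k.1 = m.1 + n.1) :
    2 * Real.pi * |dotR (evec m) (fvec n) * dotR (evec n) (evec k)| ≤ waveNum k := by
  have htransport : dotR (evec m) (fvec n) = dotR (evec m) (fvec k) := by
    simp only [dotR, evec, fvec, h, Prod.fst_add, Prod.snd_add]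
    push_cast
    ring
  have hadvect : 2 * Real.pi * |dotR (evec m) (fvec k)| ≤ waveNum k := by
    rw [waveNum, ← abs_of_pos Real.two_pi_pos, ← abs_mul]
    refine Real.abs_le_sqrt ?_
    calc (2 * Real.pi * dotR (evec m) (fvec k)) ^ 2
        ≤ (2 * Real.pi) ^ 2 * (1 * knormSq k) := by
          rw [mul_pow, ← evec_sq_add_sq m]
          gcongr
          exact dotR_sq_le _ _
      _ = lam k := by rw [lam]; ring
  have hproject : |dotR (evec n) (evec k)| ≤ 1 := by
    rw [← sq_le_one_iff_abs_le_one]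
    simpa only [evec_sq_add_sq, one_mul] using dotR_sq_le (evec n) (evec k)
  rw [htransport, abs_mul, ← mul_assoc]
  exact (mul_le_mul hadvect hproject (abs_nonneg _) (waveNum_pos k).le).trans_eq (mul_one _)

lemma summable_lam_rpow_neg {r : ℝ} (hr : 1 < r) : Summable fun k : Freq => lam k ^ (-r) := by
  have hlattice : Summable fun k : Freq => ‖![k.1.1, k.1.2]‖ ^ (-(2 * r)) := by
    refine (EisensteinSeries.summable_one_div_norm_rpow (k := 2 * r) (by linarith)).comp_injective
      (i := fun k : Freq => ![k.1.1, k.1.2]) fun k m hkm => ?_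
    exact Subtype.ext (Prod.ext (congrFun hkm 0) (congrFun hkm 1))
  refine hlattice.of_nonneg_of_le (fun k => Real.rpow_nonneg (lam_pos k).le _) fun k => ?_
  have hne : ![k.1.1, k.1.2] ≠ 0 := fun h0 =>
    k.2 (Prod.ext (congrFun h0 0) (congrFun h0 1))
  have hle : ‖![k.1.1, k.1.2]‖ ^ 2 ≤ lam k := by
    refine le_trans ?_ (knormSq_le_lam k)
    rw [← Real.le_sqrt (norm_nonneg _) (by linarith [one_le_knormSq k]),
      pi_norm_le_iff_of_nonneg (Real.sqrt_nonneg _)]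
    intro i
    rw [Int.norm_eq_abs]
    refine Real.abs_le_sqrt ?_
    fin_cases i <;> simp [knormSq, sq_nonneg]
  calc lam k ^ (-r) ≤ (‖![k.1.1, k.1.2]‖ ^ 2) ^ (-r) :=
        Real.rpow_le_rpow_of_nonpos (by positivity) hle (by linarith)
    _ = ‖![k.1.1, k.1.2]‖ ^ (-(2 * r)) := by
        rw [← Real.rpow_natCast, ← Real.rpow_mul (norm_nonneg _)]
        congr 1
        push_cast
        ring

/-! ### Sobolev norms with values in `[0, ∞]` -/

/-- The squared Sobolev norm `‖c‖²_{Ḣ^s}` as an element of `[0, ∞]`; unlike `hSq`, it is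
meaningful for every coefficient family. -/
def ehSq (s : ℝ) (c : Coef) : ℝ≥0∞ := ∑' k, ENNReal.ofReal (lam k ^ s) * ‖c k‖ₑ ^ 2

lemma ofReal_lam_rpow_mul_enorm_sq (s : ℝ) (c : Coef) (k : Freq) :
    ENNReal.ofReal (lam k ^ s) * ‖c k‖ₑ ^ 2 = ENNReal.ofReal (lam k ^ s * ‖c k‖ ^ 2) := by
  rw [ENNReal.ofReal_mul (Real.rpow_nonneg (lam_pos k).le _), ENNReal.ofReal_pow (norm_nonneg _),
    ofReal_norm]

lemma lam_rpow_mul_norm_sq_nonneg (s : ℝ) (c : Coef) (k : Freq) : 0 ≤ lam k ^ s * ‖c k‖ ^ 2 :=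
  mul_nonneg (Real.rpow_nonneg (lam_pos k).le _) (sq_nonneg _)

lemma hSq_eq_toReal_ehSq (s : ℝ) (c : Coef) : hSq s c = (ehSq s c).toReal := by
  simp only [ehSq, ofReal_lam_rpow_mul_enorm_sq]
  rw [ENNReal.tsum_toReal_eq fun _ => ENNReal.ofReal_ne_top]
  exact tsum_congr fun k => (ENNReal.toReal_ofReal (lam_rpow_mul_norm_sq_nonneg s c k)).symm

lemma finH_iff_ehSq_ne_top (s : ℝ) (c : Coef) : FinH s c ↔ ehSq s c ≠ ∞ := by
  simp only [ehSq, ofReal_lam_rpow_mul_enorm_sq]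
  refine ⟨fun h => h.tsum_ofReal_ne_top, fun h => ?_⟩
  exact (ENNReal.summable_toReal h).congr fun k =>
    ENNReal.toReal_ofReal (lam_rpow_mul_norm_sq_nonneg s c k)

lemma ehSq_mono {s s' : ℝ} (h : s ≤ s') (c : Coef) : ehSq s c ≤ ehSq s' c := by
  refine ENNReal.tsum_le_tsum fun k => ?_
  gcongr
  exact one_le_lam k

@[simp] lemma ehSq_neg (s : ℝ) (c : Coef) : ehSq s (-c) = ehSq s c := by
  simp [ehSq]

lemma add_sq_le_two_mul (x y : ℝ≥0∞) : (x + y) ^ 2 ≤ 2 * (x ^ 2 + y ^ 2) := by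
  have h := ENNReal.rpow_add_le_mul_rpow_add_rpow x y (p := 2) (by norm_num)
  norm_num at h
  exact_mod_cast h

lemma ehSq_add_le (s : ℝ) (c d : Coef) : ehSq s (c + d) ≤ 2 * (ehSq s c + ehSq s d) := by
  unfold ehSq
  rw [← ENNReal.tsum_add, ← ENNReal.tsum_mul_left]
  refine ENNReal.tsum_le_tsum fun k => ?_
  rw [← mul_add, mul_left_comm]
  gcongr
  exact (pow_le_pow_left' (enorm_add_le _ _) 2).trans (add_sq_le_two_mul _ _)

lemma ehSq_sub_le (s : ℝ) (c d : Coef) : ehSq s (c - d) ≤ 2 * (ehSq s c + ehSq s d) := by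
  simpa only [sub_eq_add_neg, ehSq_neg] using ehSq_add_le s c (-d)

lemma ehSq_le_sub_add (s : ℝ) (c d : Coef) : ehSq s c ≤ 2 * (ehSq s (c - d) + ehSq s d) := by
  simpa only [sub_add_cancel] using ehSq_add_le s (c - d) d

/-! ### The Sobolev multiplication law -/

lemma sq_lintegral_mul_le {α : Type*} [MeasurableSpace α] (μ : Measure α) {f g : α → ℝ≥0∞}
    (hf : AEMeasurable f μ) (hg : AEMeasurable g μ) :
    (∫⁻ x, f x * g x ∂μ) ^ 2 ≤ (∫⁻ x, f x ^ 2 ∂μ) * ∫⁻ x, g x ^ 2 ∂μ := by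
  have holder := ENNReal.lintegral_mul_le_Lp_mul_Lq μ Real.HolderConjugate.two_two hf hg
  simp only [Pi.mul_apply, ENNReal.rpow_two] at holder
  refine (pow_le_pow_left' holder 2).trans_eq ?_
  rw [mul_pow, ← ENNReal.rpow_mul_natCast, ← ENNReal.rpow_mul_natCast]
  norm_num

lemma sq_tsum_mul_le {ι : Type*} (f g : ι → ℝ≥0∞) :
    (∑' i, f i * g i) ^ 2 ≤ (∑' i, f i ^ 2) * ∑' i, g i ^ 2 := by
  let _ : MeasurableSpace ι := ⊤
  have h := sq_lintegral_mul_le Measure.count (f := f) (g := g)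
    measurable_from_top.aemeasurable measurable_from_top.aemeasurable
  simpa only [lintegral_count' measurable_from_top] using h

section Convolution

variable {G : Type*} [AddCommGroup G]

lemma tsum_tsum_mul_sub (f g : G → ℝ≥0∞) :
    ∑' k, ∑' m, f m * g (k - m) = (∑' k, f k) * ∑' k, g k := by
  rw [ENNReal.tsum_comm, ← ENNReal.tsum_mul_right]
  refine tsum_congr fun m => ?_
  rw [ENNReal.tsum_mul_left]
  exact congrArg _ ((Equiv.subRight m).tsum_eq g)

lemma tsum_sq_tsum_mul_left_le (f g w : G → ℝ≥0∞) :
    ∑' k, (∑' m, f m * g (k - m) * w m) ^ 2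
      ≤ (∑' k, w k ^ 2) * ((∑' k, f k ^ 2) * ∑' k, g k ^ 2) := by
  rw [← tsum_tsum_mul_sub, ← ENNReal.tsum_mul_left]
  refine ENNReal.tsum_le_tsum fun k => (sq_tsum_mul_le _ _).trans_eq ?_
  simp only [mul_pow, mul_comm]

lemma tsum_sq_tsum_mul_right_le (f g w : G → ℝ≥0∞) :
    ∑' k, (∑' m, f m * g (k - m) * w (k - m)) ^ 2
      ≤ (∑' k, w k ^ 2) * ((∑' k, f k ^ 2) * ∑' k, g k ^ 2) := by
  have hswap (k : G) : ∑' m, f m * g (k - m) * w (k - m) = ∑' m, g m * f (k - m) * w m := by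
    rw [← (Equiv.subLeft k).tsum_eq]
    simp only [Equiv.subLeft_apply, sub_sub_cancel, mul_comm (g _)]
  simp only [hswap]
  exact (tsum_sq_tsum_mul_left_le g f w).trans_eq (by rw [mul_comm (∑' k, g k ^ 2)])

lemma tsum_sq_tsum_mul_out_le (f g w : G → ℝ≥0∞) :
    ∑' k, (∑' m, f m * g (k - m) * w k) ^ 2
      ≤ (∑' k, w k ^ 2) * ((∑' k, f k ^ 2) * ∑' k, g k ^ 2) := by
  rw [← ENNReal.tsum_mul_right]
  refine ENNReal.tsum_le_tsum fun k => ?_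
  rw [ENNReal.tsum_mul_right, mul_pow, mul_comm]
  gcongr
  exact (sq_tsum_mul_le _ _).trans_eq
    (congrArg _ ((Equiv.subLeft k).tsum_eq fun m => g m ^ 2))

lemma tsum_sq_tsum_mul_add_add_le (f g w : G → ℝ≥0∞) :
    ∑' k, (∑' m, f m * g (k - m) * (w m + w (k - m) + w k)) ^ 2
      ≤ 10 * ((∑' k, w k ^ 2) * ((∑' k, f k ^ 2) * ∑' k, g k ^ 2)) := by
  set S := (∑' k, w k ^ 2) * ((∑' k, f k ^ 2) * ∑' k, g k ^ 2)
  have hsplit (k : G) : (∑' m, f m * g (k - m) * (w m + w (k - m) + w k)) ^ 2 ≤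
      4 * (∑' m, f m * g (k - m) * w m) ^ 2 + 4 * (∑' m, f m * g (k - m) * w (k - m)) ^ 2 +
        2 * (∑' m, f m * g (k - m) * w k) ^ 2 := by
    simp only [mul_add, ENNReal.tsum_add]
    refine (add_sq_le_two_mul _ _).trans ?_
    rw [mul_add]
    gcongr
    exact (mul_le_mul_right (add_sq_le_two_mul _ _) 2).trans_eq (by ring)
  calc _ ≤ 4 * S + 4 * S + 2 * S := by
        refine (ENNReal.tsum_le_tsum hsplit).trans ?_
        rw [ENNReal.tsum_add, ENNReal.tsum_add, ENNReal.tsum_mul_left, ENNReal.tsum_mul_left,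
          ENNReal.tsum_mul_left]
        gcongr
        · exact tsum_sq_tsum_mul_left_le f g w
        · exact tsum_sq_tsum_mul_right_le f g w
        · exact tsum_sq_tsum_mul_out_le f g w
    _ = 10 * S := by ring

end Convolution

/-- Extension by zero of a family on the nonzero frequencies to all of `ℤ²`, so that frequencies
can be subtracted freely. -/
def zeroExt (F : Freq → ℝ≥0∞) : ℤ × ℤ → ℝ≥0∞ := Function.extend (fun k : Freq => k.1) F 0

@[simp] lemma zeroExt_coe (F : Freq → ℝ≥0∞) (k : Freq) : zeroExt F k.1 = F k :=
  Subtype.val_injective.extend_apply F 0 k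

lemma zeroExt_of_notMem_range (F : Freq → ℝ≥0∞) {n : ℤ × ℤ}
    (hn : n ∉ range fun k : Freq => k.1) : zeroExt F n = 0 :=
  Function.extend_apply' _ _ _ hn

lemma zeroExt_zero (F : Freq → ℝ≥0∞) : zeroExt F 0 = 0 :=
  zeroExt_of_notMem_range F fun ⟨k, hk⟩ => k.2 hk

lemma tsum_zeroExt_sq (F : Freq → ℝ≥0∞) : ∑' n, zeroExt F n ^ 2 = ∑' k, F k ^ 2 := by
  rw [← Function.Injective.tsum_eq (g := fun k : Freq => k.1) Subtype.val_injective]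
  · simp only [zeroExt_coe]
  · intro n hn
    by_contra hrange
    exact hn (by simp only [zeroExt_of_notMem_range F hrange, zero_pow two_ne_zero])

lemma tsum_coe_le (F : ℤ × ℤ → ℝ≥0∞) : ∑' k : Freq, F k.1 ≤ ∑' n, F n :=
  ENNReal.tsum_comp_le_tsum_of_injective (f := fun k : Freq => k.1) Subtype.val_injective F

lemma rpow_le_two_rpow_abs_mul_rpow {x y : ℝ} (hx : 0 < x) (hy : 0 < y) (hxy : x ≤ 2 * y)
    (hyx : y ≤ 2 * x) (α : ℝ) : y ^ α ≤ 2 ^ |α| * x ^ α := by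
  rcases le_total 0 α with hα | hα
  · rw [abs_of_nonneg hα, ← Real.mul_rpow two_pos.le hx.le]
    exact Real.rpow_le_rpow hy.le hyx hα
  · have hx2 : 0 < x / 2 := half_pos hx
    calc y ^ α ≤ (x / 2) ^ α := Real.rpow_le_rpow_of_nonpos hx2 (by linarith) hα
      _ = 2 ^ |α| * x ^ α := by
        rw [abs_of_nonpos hα, Real.div_rpow hx.le two_pos.le, Real.rpow_neg two_pos.le]
        ring

lemma one_le_mul_rpow_of_le_of_le {x y z α β γ : ℝ} (hx : 0 < x) (hy : 0 < y) (hz : 0 < z)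
    (hxyz : x ≤ y + z) (hyxz : y ≤ x + z) (hzx : z ≤ x) (hzy : z ≤ y) (hαβ : 0 ≤ α + β) :
    1 ≤ 2 ^ |α| * (x ^ α * y ^ β * z ^ γ * z ^ (-(α + β + γ))) := by
  have hcompare : z ^ (α + β) ≤ 2 ^ |α| * (x ^ α * y ^ β) :=
    calc z ^ (α + β) ≤ y ^ α * y ^ β := by
          rw [← Real.rpow_add hy]
          exact Real.rpow_le_rpow hz.le hzy hαβ
      _ ≤ 2 ^ |α| * x ^ α * y ^ β := by
          gcongr
          exact rpow_le_two_rpow_abs_mul_rpow hx hy (by linarith) (by linarith) α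
      _ = 2 ^ |α| * (x ^ α * y ^ β) := mul_assoc _ _ _
  calc 1 = z ^ (α + β) * (z ^ γ * z ^ (-(α + β + γ))) := by
        rw [← Real.rpow_add hz, ← Real.rpow_add hz, ← Real.rpow_zero z]
        congr 1
        ring
    _ ≤ 2 ^ |α| * (x ^ α * y ^ β) * (z ^ γ * z ^ (-(α + β + γ))) := by gcongr
    _ = 2 ^ |α| * (x ^ α * y ^ β * z ^ γ * z ^ (-(α + β + γ))) := by ring

/-- The two larger sides of a triangle are comparable, so the weight is smallest when it is
measured by the smallest side. -/
lemma one_le_mul_triangle_weight {x y z α β γ : ℝ} (hx : 0 < x) (hy : 0 < y) (hz : 0 < z)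
    (hxyz : x ≤ y + z) (hyxz : y ≤ x + z) (hzxy : z ≤ x + y)
    (hαβ : 0 ≤ α + β) (hαγ : 0 ≤ α + γ) (hβγ : 0 ≤ β + γ) :
    1 ≤ 2 ^ (|α| + |β|) * (x ^ α * y ^ β * z ^ γ *
      (x ^ (-(α + β + γ)) + y ^ (-(α + β + γ)) + z ^ (-(α + β + γ)))) := by
  set X := x ^ (-(α + β + γ))
  set Y := y ^ (-(α + β + γ))
  set Z := z ^ (-(α + β + γ))
  have hX0 : 0 ≤ X := by positivity
  have hY0 : 0 ≤ Y := by positivity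
  have hZ0 : 0 ≤ Z := by positivity
  have enlarge {W δ : ℝ} (hδ : |δ| ≤ |α| + |β|) (hW : 0 ≤ W) (hWXYZ : W ≤ X + Y + Z)
      (h : 1 ≤ 2 ^ |δ| * (x ^ α * y ^ β * z ^ γ * W)) :
      1 ≤ 2 ^ (|α| + |β|) * (x ^ α * y ^ β * z ^ γ * (X + Y + Z)) := by
    refine h.trans ?_
    gcongr
    exact one_le_two
  rcases le_total x y with hxy | hyx
  · rcases le_total x z with hxz | hzx
    · refine enlarge (δ := β) (W := X) (by simp) hX0 (by linarith) ?_
      have h := one_le_mul_rpow_of_le_of_le (γ := α) hy hz hx (by linarith) (by linarith) hxy hxz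
        hβγ
      rwa [show y ^ β * z ^ γ * x ^ α = x ^ α * y ^ β * z ^ γ by ring,
        show β + γ + α = α + β + γ by ring] at h
    · refine enlarge (δ := α) (W := Z) (by simp) hZ0 (by linarith) ?_
      exact one_le_mul_rpow_of_le_of_le hx hy hz hxyz hyxz hzx (hzx.trans hxy) hαβ
  · rcases le_total y z with hyz | hzy
    · refine enlarge (δ := α) (W := Y) (by simp) hY0 (by linarith) ?_
      have h := one_le_mul_rpow_of_le_of_le (γ := β) hx hz hy (by linarith) (by linarith) hyx hyz
        hαγ
      rwa [show x ^ α * z ^ γ * y ^ β = x ^ α * y ^ β * z ^ γ by ring,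
        show α + γ + β = α + β + γ by ring] at h
    · refine enlarge (δ := α) (W := Z) (by simp) hZ0 (by linarith) ?_
      exact one_le_mul_rpow_of_le_of_le hx hy hz hxyz hyxz (hzy.trans hyx) hzy hαβ

lemma waveNum_rpow_le {k m n : Freq} (h : k.1 = m.1 + n.1) {τ p q : ℝ} (hp : τ ≤ p) (hq : τ ≤ q)
    (hpq : 0 ≤ p + q) :
    waveNum k ^ τ ≤ 2 ^ (|τ| + |q|) * (waveNum m ^ p * waveNum n ^ q *
      (waveNum m ^ (-(p + q - τ)) + waveNum n ^ (-(p + q - τ)) + waveNum k ^ (-(p + q - τ)))) := by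
  have hmk : waveNum m ≤ waveNum k + waveNum n := by
    simpa only [waveNum_fneg] using
      waveNum_le_add (k := m) (m := k) (n := fneg n) (by simp [h, fneg])
  have hnk : waveNum n ≤ waveNum k + waveNum m := by
    simpa only [waveNum_fneg] using
      waveNum_le_add (k := n) (m := k) (n := fneg m) (by simp [h, fneg])
  have hpos := waveNum_pos k
  have htriangle := one_le_mul_triangle_weight (α := -τ) (β := q) (γ := p) hpos (waveNum_pos n)
    (waveNum_pos m) (by linarith [waveNum_le_add h]) hnk hmk (by linarith) (by linarith)
    (by linarith)
  rw [abs_neg, show -τ + q + p = p + q - τ by ring] at htriangle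
  refine (le_mul_of_one_le_right (Real.rpow_nonneg hpos.le τ) htriangle).trans_eq ?_
  have hcancel : waveNum k ^ τ * waveNum k ^ (-τ) = 1 := by
    rw [← Real.rpow_add hpos, add_neg_cancel, Real.rpow_zero]
  linear_combination (2 ^ (|τ| + |q|) * (waveNum m ^ p * waveNum n ^ q *
    (waveNum m ^ (-(p + q - τ)) + waveNum n ^ (-(p + q - τ)) + waveNum k ^ (-(p + q - τ))))) *
    hcancel

/-- The Fourier multiplier `(2π|k|)^s` with values in `[0, ∞]`. -/
def ewaveNumRpow (s : ℝ) (k : Freq) : ℝ≥0∞ := ENNReal.ofReal (waveNum k ^ s)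

lemma ehSq_eq_tsum_sq (s : ℝ) (c : Coef) : ehSq s c = ∑' k, (ewaveNumRpow s k * ‖c k‖ₑ) ^ 2 := by
  refine tsum_congr fun k => ?_
  rw [mul_pow, ewaveNumRpow, ← ENNReal.ofReal_pow (Real.rpow_nonneg (waveNum_pos k).le _),
    waveNum_rpow_sq]

lemma tsum_ewaveNumRpow_neg_sq_ne_top {r : ℝ} (hr : 1 < r) :
    ∑' k, ewaveNumRpow (-r) k ^ 2 ≠ ∞ := by
  simp only [ewaveNumRpow, ← ENNReal.ofReal_pow (Real.rpow_nonneg (waveNum_pos _).le _),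
    waveNum_rpow_sq]
  exact (summable_lam_rpow_neg hr).tsum_ofReal_ne_top

lemma ewaveNumRpow_mul_enorm_Bc_le (τ : ℝ) (c d : Coef) (k : Freq) :
    ewaveNumRpow (τ - 1) k * ‖Bc c d k‖ₑ ≤
      ∑' m : Freq, ewaveNumRpow τ k * (‖c m‖ₑ * zeroExt (fun n => ‖d n‖ₑ) (k.1 - m.1)) := by
  have hpow : ewaveNumRpow τ k = ewaveNumRpow (τ - 1) k * ENNReal.ofReal (waveNum k) := by
    have hpos := waveNum_pos k
    rw [ewaveNumRpow, ewaveNumRpow, ← ENNReal.ofReal_mul (by positivity),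
      Real.rpow_sub_one hpos.ne', div_mul_cancel₀ _ hpos.ne']
  simp only [hpow, mul_assoc]
  rw [ENNReal.tsum_mul_left, ENNReal.tsum_mul_left, Bc, enorm_mul]
  refine mul_le_mul_right ?_ _
  refine (mul_le_mul_right enorm_tsum_le_tsum_enorm _).trans ?_
  rw [← ENNReal.tsum_mul_left, ← ENNReal.tsum_mul_left]
  refine ENNReal.tsum_le_tsum fun m => ?_
  split_ifs with hn
  · set n : Freq := ⟨k.1 - m.1, hn⟩ with hn_def
    have hsymbol := two_pi_mul_abs_symbol_le (k := k) (m := m) (n := n) (by simp [hn_def])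
    rw [show k.1 - m.1 = n.1 from rfl, zeroExt_coe, enorm_mul (c m * d n), enorm_mul (c m),
      mul_left_comm, mul_comm (ENNReal.ofReal _)]
    gcongr
    rw [← enorm_mul, ← ofReal_norm]
    refine ENNReal.ofReal_le_ofReal (le_of_eq_of_le ?_ hsymbol)
    simp only [norm_mul, Complex.norm_real, Complex.norm_I, mul_one, Real.norm_eq_abs, abs_mul,
      abs_two, abs_of_pos Real.pi_pos]
  · simp

lemma ewaveNumRpow_mul_zeroExt_le {τ p q : ℝ} (hp : τ ≤ p) (hq : τ ≤ q) (hpq : 0 ≤ p + q)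
    (c d : Coef) (k m : Freq) :
    ewaveNumRpow τ k * (‖c m‖ₑ * zeroExt (fun n => ‖d n‖ₑ) (k.1 - m.1)) ≤
      ENNReal.ofReal (2 ^ (|τ| + |q|)) *
        (ewaveNumRpow p m * ‖c m‖ₑ * zeroExt (fun n => ewaveNumRpow q n * ‖d n‖ₑ) (k.1 - m.1) *
          (ewaveNumRpow (-(p + q - τ)) m + zeroExt (ewaveNumRpow (-(p + q - τ))) (k.1 - m.1) +
            ewaveNumRpow (-(p + q - τ)) k)) := by
  by_cases hn : k.1 - m.1 = 0
  · simp only [hn, zeroExt_zero, mul_zero, zero_le]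
  · set n : Freq := ⟨k.1 - m.1, hn⟩ with hn_def
    have hk := waveNum_pos k
    have hm := waveNum_pos m
    have hn := waveNum_pos n
    rw [show k.1 - m.1 = n.1 from rfl]
    simp only [zeroExt_coe, ewaveNumRpow]
    calc ENNReal.ofReal (waveNum k ^ τ) * (‖c m‖ₑ * ‖d n‖ₑ)
        ≤ ENNReal.ofReal (2 ^ (|τ| + |q|) * (waveNum m ^ p * waveNum n ^ q *
            (waveNum m ^ (-(p + q - τ)) + waveNum n ^ (-(p + q - τ)) +
              waveNum k ^ (-(p + q - τ))))) * (‖c m‖ₑ * ‖d n‖ₑ) := by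
          gcongr
          exact waveNum_rpow_le (by simp [hn_def]) hp hq hpq
      _ = _ := by
          rw [ENNReal.ofReal_mul (by positivity), ENNReal.ofReal_mul (by positivity),
            ENNReal.ofReal_mul (by positivity), ENNReal.ofReal_add (by positivity) (by positivity),
            ENNReal.ofReal_add (by positivity) (by positivity)]
          ring

theorem exists_ehSq_Bc_le {τ p q : ℝ} (hp : τ ≤ p) (hq : τ ≤ q) (hpq : 0 ≤ p + q)
    (hdim : 1 < p + q - τ) :
    ∃ K : ℝ≥0, ∀ c d, ehSq (τ - 1) (Bc c d) ≤ K * (ehSq p c * ehSq q d) := by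
  set C : ℝ≥0∞ := ENNReal.ofReal (2 ^ (|τ| + |q|))
  set w : Freq → ℝ≥0∞ := ewaveNumRpow (-(p + q - τ))
  set W : ℝ≥0∞ := ∑' k, w k ^ 2 with hW
  have hK : C ^ 2 * 10 * W ≠ ∞ :=
    ENNReal.mul_ne_top (ENNReal.mul_ne_top (ENNReal.pow_ne_top ENNReal.ofReal_ne_top) (by simp))
      (tsum_ewaveNumRpow_neg_sq_ne_top hdim)
  refine ⟨(C ^ 2 * 10 * W).toNNReal, fun c d => ?_⟩
  set F : ℤ × ℤ → ℝ≥0∞ := zeroExt fun m => ewaveNumRpow p m * ‖c m‖ₑ with hF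
  set D : ℤ × ℤ → ℝ≥0∞ := zeroExt fun n => ewaveNumRpow q n * ‖d n‖ₑ
  have hconv (k : Freq) : ewaveNumRpow (τ - 1) k * ‖Bc c d k‖ₑ ≤
      C * ∑' m, F m * D (k.1 - m) * (zeroExt w m + zeroExt w (k.1 - m) + zeroExt w k.1) := by
    refine (ewaveNumRpow_mul_enorm_Bc_le τ c d k).trans ?_
    refine le_trans ?_ (mul_le_mul_right (tsum_coe_le _) C)
    rw [← ENNReal.tsum_mul_left]
    refine ENNReal.tsum_le_tsum fun m => ?_
    simp only [hF, zeroExt_coe]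
    exact ewaveNumRpow_mul_zeroExt_le hp hq hpq c d k m
  rw [ENNReal.coe_toNNReal hK, ehSq_eq_tsum_sq]
  calc ∑' k, (ewaveNumRpow (τ - 1) k * ‖Bc c d k‖ₑ) ^ 2
      ≤ C ^ 2 * ∑' k, (∑' m, F m * D (k - m) *
          (zeroExt w m + zeroExt w (k - m) + zeroExt w k)) ^ 2 := by
        refine le_trans ?_ (mul_le_mul_right (tsum_coe_le _) _)
        rw [← ENNReal.tsum_mul_left]
        exact ENNReal.tsum_le_tsum fun k =>
          (pow_le_pow_left' (hconv k) 2).trans_eq (mul_pow _ _ 2)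
    _ ≤ C ^ 2 * (10 * (W * (ehSq p c * ehSq q d))) := by
        rw [hW, ehSq_eq_tsum_sq, ehSq_eq_tsum_sq, ← tsum_zeroExt_sq, ← tsum_zeroExt_sq,
          ← tsum_zeroExt_sq]
        gcongr
        exact tsum_sq_tsum_mul_add_add_le F D (zeroExt w)
    _ = C ^ 2 * 10 * W * (ehSq p c * ehSq q d) := by ring

/-! ### Convolution kernels on the half-line -/

lemma setLIntegral_Ioc_comp_sub_left (κ : ℝ → ℝ≥0∞) (a t : ℝ) :
    ∫⁻ s in Ioc a t, κ (t - s) = ∫⁻ r in Ioc 0 (t - a), κ r := by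
  rw [← restrict_Ioo_eq_restrict_Ioc, ← restrict_Ioo_eq_restrict_Ioc,
    ← lintegral_indicator measurableSet_Ioo, ← lintegral_indicator measurableSet_Ioo,
    ← lintegral_sub_left_eq_self ((Ioo 0 (t - a)).indicator κ) t]
  refine lintegral_congr fun s => ?_
  by_cases hs : s ∈ Ioo a t
  · rw [indicator_of_mem hs, indicator_of_mem (by constructor <;> linarith [hs.1, hs.2])]
  · rw [indicator_of_notMem hs, indicator_of_notMem]
    exact fun hr => hs ⟨by linarith [hr.2], by linarith [hr.1]⟩

/-- The exponential kernel `exp (-μ t)` with values in `[0, ∞]`: the multiplier of the heat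
semigroup for `μ = ν λ_k`, and the weight in Grönwall's inequality. -/
def decay (μ t : ℝ) : ℝ≥0∞ := ENNReal.ofReal (Real.exp (-(μ * t)))

@[fun_prop]
lemma measurable_decay (μ : ℝ) : Measurable (decay μ) := by
  unfold decay
  fun_prop

lemma decay_ne_top (μ t : ℝ) : decay μ t ≠ ∞ := ENNReal.ofReal_ne_top

lemma decay_add (μ s t : ℝ) : decay μ (s + t) = decay μ s * decay μ t := by
  rw [decay, decay, decay, ← ENNReal.ofReal_mul (Real.exp_pos _).le, ← Real.exp_add]
  ring_nf

lemma decay_le_one {μ t : ℝ} (h : 0 ≤ μ * t) : decay μ t ≤ 1 :=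
  ENNReal.ofReal_le_one.mpr (Real.exp_le_one_iff.mpr (neg_nonpos.mpr h))

lemma decay_le_rpow {μ t : ℝ} (h : 0 < μ * t) {θ : ℝ} (hθ : 0 ≤ θ) (hθ₁ : θ ≤ 1) :
    decay μ t ≤ ENNReal.ofReal ((μ * t) ^ (-θ)) := by
  refine ENNReal.ofReal_le_ofReal ?_
  rw [Real.rpow_neg h.le, Real.exp_neg]
  refine inv_anti₀ (Real.rpow_pos_of_pos h θ) ?_
  rcases le_total (μ * t) 1 with hle | hge
  · exact (Real.rpow_le_one h.le hle hθ).trans (Real.one_le_exp h.le)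
  · calc (μ * t) ^ θ ≤ (μ * t) ^ (1 : ℝ) := Real.rpow_le_rpow_of_exponent_le hge hθ₁
      _ ≤ Real.exp (μ * t) :=
        (Real.rpow_one _).trans_le (by linarith [Real.add_one_le_exp (μ * t)])

lemma lintegral_Ioc_decay_le {μ : ℝ} (hμ : 0 < μ) (b : ℝ) :
    ∫⁻ r in Ioc 0 b, decay μ r ≤ ENNReal.ofReal (1 / μ) := by
  simp only [decay, ← neg_mul]
  refine (lintegral_mono_set Ioc_subset_Ioi_self).trans_eq ?_
  rw [← ofReal_integral_eq_lintegral_ofReal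
    (integrableOn_exp_mul_Ioi (neg_neg_of_pos hμ) 0) (ae_of_all _ fun _ => (Real.exp_pos _).le),
    integral_exp_mul_Ioi (neg_neg_of_pos hμ), mul_zero, Real.exp_zero, neg_div_neg_eq]

lemma lintegral_Ioc_decay_sub_le {μ : ℝ} (hμ : 0 < μ) (a t : ℝ) :
    ∫⁻ s in Ioc a t, decay μ (t - s) ≤ ENNReal.ofReal (1 / μ) :=
  (setLIntegral_Ioc_comp_sub_left (decay μ) a t).trans_le (lintegral_Ioc_decay_le hμ _)

lemma lintegral_Ioc_rpow_ne_top {r : ℝ} (hr : -1 < r) (b : ℝ) :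
    ∫⁻ s in Ioc 0 b, ENNReal.ofReal (s ^ r) ≠ ∞ := by
  have h : IntegrableOn (fun s : ℝ => s ^ r) (Ioc 0 b) :=
    (intervalIntegral.intervalIntegrable_rpow' hr).1
  exact (IntegrableOn.setLIntegral_lt_top h).ne

/-- Young's inequality `‖κ * h‖_{L¹} ≤ ‖κ‖_{L¹} ‖h‖_{L¹}` for causal convolutions. -/
lemma lintegral_lintegral_Ioc_mul_le {κ h : ℝ → ℝ≥0∞} (hκ : Measurable κ) {T : ℝ}
    (hh : AEMeasurable h (volume.restrict (Ioc 0 T))) :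
    ∫⁻ t in Ioc 0 T, ∫⁻ s in Ioc 0 t, κ (t - s) * h s ≤
      (∫⁻ r in Ioc 0 T, κ r) * ∫⁻ s in Ioc 0 T, h s := by
  set K := (Ioc 0 T).indicator κ with hK
  have hKm : Measurable K := hκ.indicator measurableSet_Ioc
  have htranslate (s : ℝ) : ∫⁻ t in Ioc 0 T, K (t - s) ≤ ∫⁻ r, K r :=
    (setLIntegral_le_lintegral _ _).trans_eq (lintegral_sub_right_eq_self K s)
  have hcausal (t : ℝ) (ht : t ∈ Ioc 0 T) :
      ∫⁻ s in Ioc 0 t, κ (t - s) * h s ≤ ∫⁻ s in Ioc 0 T, K (t - s) * h s := by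
    rw [← restrict_Ioo_eq_restrict_Ioc (a := 0) (b := t)]
    refine le_trans (setLIntegral_mono' measurableSet_Ioo fun s hs => ?_)
      (lintegral_mono_set (Ioo_subset_Ioc_self.trans (Ioc_subset_Ioc_right ht.2)))
    rw [hK, indicator_of_mem (by constructor <;> linarith [hs.1, hs.2, ht.2])]
  calc ∫⁻ t in Ioc 0 T, ∫⁻ s in Ioc 0 t, κ (t - s) * h s
      ≤ ∫⁻ t in Ioc 0 T, ∫⁻ s in Ioc 0 T, K (t - s) * h s :=
        setLIntegral_mono' measurableSet_Ioc hcausal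
    _ = ∫⁻ s in Ioc 0 T, (∫⁻ t in Ioc 0 T, K (t - s)) * h s := by
        rw [lintegral_lintegral_swap]
        · exact lintegral_congr fun s => lintegral_mul_const _ (by fun_prop)
        · exact (hKm.comp (measurable_fst.sub measurable_snd)).aemeasurable.mul hh.comp_snd
    _ ≤ ∫⁻ s in Ioc 0 T, (∫⁻ r, K r) * h s :=
        lintegral_mono fun s => mul_le_mul' (htranslate s) le_rfl
    _ = (∫⁻ r in Ioc 0 T, κ r) * ∫⁻ s in Ioc 0 T, h s := by
        rw [lintegral_const_mul'' _ hh, hK, lintegral_indicator measurableSet_Ioc]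

lemma decay_mul_lintegral_le {γ : ℝ} (hγ : 0 < γ) {φ : ℝ → ℝ≥0∞} {m : ℝ≥0∞} {t : ℝ}
    (hφ : ∀ s ∈ Ioc 0 t, decay γ s * φ s ≤ m) :
    decay γ t * ∫⁻ s in Ioc 0 t, φ s ≤ ENNReal.ofReal (1 / γ) * m :=
  calc decay γ t * ∫⁻ s in Ioc 0 t, φ s
      = ∫⁻ s in Ioc 0 t, decay γ (t - s) * (decay γ s * φ s) := by
        simp only [← mul_assoc, ← decay_add, sub_add_cancel]
        rw [lintegral_const_mul' _ _ (decay_ne_top γ t)]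
    _ ≤ ∫⁻ s in Ioc 0 t, decay γ (t - s) * m := by
        refine setLIntegral_mono' measurableSet_Ioc fun s hs => ?_
        gcongr
        exact hφ s hs
    _ ≤ ENNReal.ofReal (1 / γ) * m := by
        rw [lintegral_mul_const _ (by fun_prop)]
        gcongr
        exact lintegral_Ioc_decay_sub_le hγ 0 t

lemma le_two_mul_of_le_add_half {m A : ℝ≥0∞} (hm : m ≠ ∞) (h : m ≤ A + m / 2) : m ≤ 2 * A := by
  have hhalf : m / 2 ≤ A := by
    refine ENNReal.le_of_add_le_add_right (ENNReal.div_ne_top hm two_ne_zero) (?_ : _ + m / 2 ≤ _)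
    rwa [ENNReal.add_halves]
  rw [← ENNReal.add_halves m, two_mul]
  gcongr

lemma coe_mul_ofReal_inv_le_half (K : ℝ≥0) :
    K * ENNReal.ofReal (1 / (2 * K + 1)) ≤ 1 / 2 := by
  rw [← ENNReal.ofReal_coe_nnreal, ← ENNReal.ofReal_mul K.coe_nonneg,
    show (1 / 2 : ℝ≥0∞) = ENNReal.ofReal (1 / 2) by
      rw [ENNReal.ofReal_div_of_pos two_pos, ENNReal.ofReal_one, ENNReal.ofReal_ofNat]]
  refine ENNReal.ofReal_le_ofReal ?_
  rw [mul_one_div, div_le_div_iff₀ (by positivity) two_pos]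
  linarith

/-- Grönwall's inequality: for `γ ≥ 2K` the integral of the past is absorbed by half of the
supremum of `exp (-γ t) φ t`. -/
lemma le_two_mul_exp_of_le_add_lintegral {φ : ℝ → ℝ≥0∞} {T : ℝ} {A : ℝ≥0∞} {M K : ℝ≥0}
    (hbdd : ∀ t ∈ Ioc 0 T, φ t ≤ M)
    (hφ : ∀ t ∈ Ioc 0 T, φ t ≤ A + K * ∫⁻ s in Ioc 0 t, φ s) :
    ∀ t ∈ Ioc 0 T, φ t ≤ ENNReal.ofReal (Real.exp ((2 * K + 1) * T)) * (2 * A) := by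
  set γ : ℝ := 2 * K + 1
  have hγ : 0 < γ := by positivity
  have hdecay {t : ℝ} (ht : t ∈ Ioc 0 T) : decay γ t ≤ 1 := decay_le_one (mul_pos hγ ht.1).le
  set m : ℝ≥0∞ := ⨆ t ∈ Ioc 0 T, decay γ t * φ t
  have hm_le {t : ℝ} (ht : t ∈ Ioc 0 T) : decay γ t * φ t ≤ m :=
    le_biSup (fun t => decay γ t * φ t) ht
  have hm_top : m ≠ ∞ := by
    refine ne_top_of_le_ne_top ENNReal.coe_ne_top (iSup₂_le fun t ht => ?_ : m ≤ M)
    exact (mul_le_mul' (hdecay ht) (hbdd t ht)).trans_eq (one_mul _)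
  have habsorb : K * ENNReal.ofReal (1 / γ) ≤ 1 / 2 := coe_mul_ofReal_inv_le_half K
  have hm : m ≤ 2 * A := by
    refine le_two_mul_of_le_add_half hm_top (iSup₂_le fun t ht => ?_)
    calc decay γ t * φ t ≤ decay γ t * A + K * (decay γ t * ∫⁻ s in Ioc 0 t, φ s) := by
          rw [mul_left_comm, ← mul_add]
          gcongr
          exact hφ t ht
      _ ≤ 1 * A + K * (ENNReal.ofReal (1 / γ) * m) :=
          add_le_add (mul_le_mul' (hdecay ht) le_rfl) (mul_le_mul' le_rfl
            (decay_mul_lintegral_le hγ fun s hs => hm_le ⟨hs.1, hs.2.trans ht.2⟩))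
      _ ≤ A + m / 2 := by
          rw [one_mul, ← mul_assoc, ENNReal.div_eq_inv_mul, ← one_div]
          gcongr
  intro t ht
  calc φ t = decay γ (-t) * (decay γ t * φ t) := by
        rw [← mul_assoc, ← decay_add, neg_add_cancel, decay, mul_zero, neg_zero, Real.exp_zero,
          ENNReal.ofReal_one, one_mul]
    _ ≤ ENNReal.ofReal (Real.exp (γ * T)) * (2 * A) := by
        refine mul_le_mul' (ENNReal.ofReal_le_ofReal ?_) ((hm_le ht).trans hm)
        rw [mul_neg, neg_neg]
        gcongr
        exact ht.2

/-! ### The forced heat equation -/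

lemma aemeasurable_ehSq {μ : Measure ℝ} {u : ℝ → Coef}
    (hu : ∀ k, AEMeasurable (fun t => u t k) μ) (s : ℝ) :
    AEMeasurable (fun t => ehSq s (u t)) μ :=
  AEMeasurable.tsum fun k => ((hu k).enorm.pow_const 2).const_mul _

lemma lintegral_ehSq {μ : Measure ℝ} {u : ℝ → Coef}
    (hu : ∀ k, AEMeasurable (fun t => u t k) μ) (s : ℝ) :
    ∫⁻ t, ehSq s (u t) ∂μ = ∑' k, ENNReal.ofReal (lam k ^ s) * ∫⁻ t, ‖u t k‖ₑ ^ 2 ∂μ := by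
  simp only [ehSq]
  rw [lintegral_tsum fun k => ((hu k).enorm.pow_const 2).const_mul _]
  exact tsum_congr fun k => lintegral_const_mul' _ _ ENNReal.ofReal_ne_top

lemma enorm_coe_exp_neg_mul (μ t : ℝ) : ‖((Real.exp (-(μ * t)) : ℝ) : ℂ)‖ₑ = decay μ t := by
  rw [← ofReal_norm, Complex.norm_real, Real.norm_of_nonneg (Real.exp_pos _).le, decay]

lemma enorm_heatS (ν t : ℝ) (c : Coef) (k : Freq) :
    ‖heatS ν t c k‖ₑ = decay (ν * lam k) t * ‖c k‖ₑ := by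
  rw [heatS, enorm_mul, enorm_coe_exp_neg_mul]

lemma measurable_heatS (ν : ℝ) (c : Coef) (k : Freq) : Measurable fun t => heatS ν t c k := by
  unfold heatS
  fun_prop

lemma enorm_heatS_sq_le {ν t : ℝ} (hν : 0 < ν) (ht : 0 ≤ t) (c : Coef) (k : Freq) :
    ‖heatS ν t c k‖ₑ ^ 2 ≤ decay (ν * lam k) t * ‖c k‖ₑ ^ 2 := by
  rw [enorm_heatS, mul_pow]
  refine mul_le_mul' (pow_le_of_le_one zero_le (decay_le_one ?_) two_ne_zero) le_rfl
  exact mul_nonneg (mul_pos hν (lam_pos k)).le ht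

lemma ehSq_heatS_le {ν t : ℝ} (hν : 0 < ν) (ht : 0 ≤ t) (s : ℝ) (c : Coef) :
    ehSq s (heatS ν t c) ≤ ehSq s c := by
  refine ENNReal.tsum_le_tsum fun k => mul_le_mul' le_rfl ?_
  refine (enorm_heatS_sq_le hν ht c k).trans (mul_le_of_le_one_left' (decay_le_one ?_))
  exact mul_nonneg (mul_pos hν (lam_pos k)).le ht

lemma ehSq_heatS_le_rpow_mul {ν t : ℝ} (hν : 0 < ν) (ht : 0 < t) {θ : ℝ} (hθ : 0 ≤ θ)
    (hθ₁ : θ ≤ 1) (s : ℝ) (c : Coef) :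
    ehSq (s + θ) (heatS ν t c) ≤ ENNReal.ofReal ((ν * t) ^ (-θ)) * ehSq s c := by
  unfold ehSq
  rw [← ENNReal.tsum_mul_left]
  refine ENNReal.tsum_le_tsum fun k => ?_
  have hlam := lam_pos k
  have hdecay : decay (ν * lam k) t ≤ ENNReal.ofReal ((ν * lam k * t) ^ (-θ)) :=
    decay_le_rpow (by positivity) hθ hθ₁
  calc ENNReal.ofReal (lam k ^ (s + θ)) * ‖heatS ν t c k‖ₑ ^ 2
      ≤ ENNReal.ofReal (lam k ^ (s + θ)) *
          (ENNReal.ofReal ((ν * lam k * t) ^ (-θ)) * ‖c k‖ₑ ^ 2) :=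
        mul_le_mul' le_rfl
          ((enorm_heatS_sq_le hν ht.le c k).trans (mul_le_mul' hdecay le_rfl))
    _ = ENNReal.ofReal ((ν * t) ^ (-θ)) * (ENNReal.ofReal (lam k ^ s) * ‖c k‖ₑ ^ 2) := by
        rw [← mul_assoc, ← mul_assoc, ← ENNReal.ofReal_mul (by positivity),
          ← ENNReal.ofReal_mul (by positivity), mul_right_comm ν,
          Real.mul_rpow (by positivity) hlam.le, Real.rpow_add hlam, Real.rpow_neg hlam.le]
        field_simp

lemma lintegral_ehSq_heatS_le {ν : ℝ} (hν : 0 < ν) (T s : ℝ) (c : Coef) :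
    ∫⁻ t in Ioc 0 T, ehSq (s + 1) (heatS ν t c) ≤ ENNReal.ofReal (1 / ν) * ehSq s c := by
  rw [lintegral_ehSq fun k => (measurable_heatS ν c k).aemeasurable, ehSq, ← ENNReal.tsum_mul_left]
  refine ENNReal.tsum_le_tsum fun k => ?_
  have hlam := lam_pos k
  calc ENNReal.ofReal (lam k ^ (s + 1)) * ∫⁻ t in Ioc 0 T, ‖heatS ν t c k‖ₑ ^ 2
      ≤ ENNReal.ofReal (lam k ^ (s + 1)) * ∫⁻ t in Ioc 0 T, decay (ν * lam k) t * ‖c k‖ₑ ^ 2 :=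
        mul_le_mul' le_rfl (setLIntegral_mono' measurableSet_Ioc fun t ht =>
          enorm_heatS_sq_le hν ht.1.le c k)
    _ ≤ ENNReal.ofReal (lam k ^ (s + 1)) * (ENNReal.ofReal (1 / (ν * lam k)) * ‖c k‖ₑ ^ 2) := by
        rw [lintegral_mul_const _ (by fun_prop)]
        exact mul_le_mul' le_rfl (mul_le_mul' (lintegral_Ioc_decay_le (by positivity) T) le_rfl)
    _ = ENNReal.ofReal (1 / ν) * (ENNReal.ofReal (lam k ^ s) * ‖c k‖ₑ ^ 2) := by
        rw [← mul_assoc, ← mul_assoc, ← ENNReal.ofReal_mul (by positivity),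
          ← ENNReal.ofReal_mul (by positivity), Real.rpow_add_one hlam.ne']
        field_simp

lemma enorm_sub_le_lintegral_of_hasDerivAt {z z' : ℝ → ℂ} {a b : ℝ} (hab : a ≤ b)
    (hz : ContinuousOn z (Icc a b)) (hz' : ∀ x ∈ Ioc a b, HasDerivAt z (z' x) x) :
    ‖z b - z a‖ₑ ≤ ∫⁻ s in Ioc a b, ‖z' s‖ₑ := by
  by_cases htop : ∫⁻ s in Ioc a b, ‖z' s‖ₑ = ∞
  · exact htop ▸ le_top
  have hmeas : AEStronglyMeasurable z' (volume.restrict (Ioc a b)) :=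
    (stronglyMeasurable_deriv z).aestronglyMeasurable.congr
      ((ae_restrict_mem measurableSet_Ioc).mono fun x hx => (hz' x hx).deriv)
  have hint : IntervalIntegrable z' volume a b :=
    (intervalIntegrable_iff_integrableOn_Ioc_of_le hab).mpr ⟨hmeas, lt_top_iff_ne_top.mpr htop⟩
  rw [← intervalIntegral.integral_eq_sub_of_hasDerivAt_of_le hab hz
    (fun x hx => hz' x ⟨hx.1, hx.2.le⟩) hint, intervalIntegral.integral_of_le hab]
  exact enorm_integral_le_lintegral_enorm _

lemma enorm_sub_exp_mul_le_lintegral_decay_mul {y g : ℝ → ℂ} {μ a b : ℝ} (hab : a ≤ b)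
    (hy : ContinuousOn y (Icc a b))
    (hy' : ∀ x ∈ Ioc a b, HasDerivAt y (g x - (μ : ℂ) * y x) x) :
    ‖y b - (Real.exp (-(μ * (b - a))) : ℂ) * y a‖ₑ ≤
      ∫⁻ s in Ioc a b, decay μ (b - s) * ‖g s‖ₑ := by
  have hexp (x : ℝ) : HasDerivAt (fun s : ℝ => ((Real.exp (-(μ * (b - s))) : ℝ) : ℂ))
      (((Real.exp (-(μ * (b - x))) : ℝ) : ℂ) * (μ : ℂ)) x := by
    have hlin : HasDerivAt (fun s => -(μ * (b - s))) μ x := by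
      simpa using (((hasDerivAt_id x).const_sub b).const_mul μ).fun_neg
    simpa using hlin.exp.ofReal_comp
  have hprod : ∀ x ∈ Ioc a b, HasDerivAt (fun s => ((Real.exp (-(μ * (b - s))) : ℝ) : ℂ) * y s)
      (((Real.exp (-(μ * (b - x))) : ℝ) : ℂ) * g x) x := by
    intro x hx
    convert! (hexp x).mul (hy' x hx) using 1
    ring
  have hcont : ContinuousOn (fun s => ((Real.exp (-(μ * (b - s))) : ℝ) : ℂ) * y s) (Icc a b) :=
    ContinuousOn.mul (fun x _ => (hexp x).continuousAt.continuousWithinAt) hy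
  have hftc := enorm_sub_le_lintegral_of_hasDerivAt hab hcont hprod
  simpa only [sub_self, mul_zero, neg_zero, Real.exp_zero, Complex.ofReal_one, one_mul, enorm_mul,
    enorm_coe_exp_neg_mul] using hftc

lemma sq_lintegral_decay_mul_le {μ : ℝ} (hμ : 0 < μ) {a b : ℝ} {h : ℝ → ℝ≥0∞}
    (hh : AEMeasurable h (volume.restrict (Ioc a b))) :
    (∫⁻ s in Ioc a b, decay μ (b - s) * h s) ^ 2 ≤
      ENNReal.ofReal (1 / μ) * ∫⁻ s in Ioc a b, decay μ (b - s) * h s ^ 2 := by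
  have hhalf (r : ℝ) : decay (μ / 2) r * decay (μ / 2) r = decay μ r := by
    simp only [decay]
    rw [← ENNReal.ofReal_mul (Real.exp_pos _).le, ← Real.exp_add]
    ring_nf
  have hmeas : Measurable fun s => decay (μ / 2) (b - s) := by fun_prop
  have hcs := sq_lintegral_mul_le (volume.restrict (Ioc a b)) hmeas.aemeasurable
    (hmeas.aemeasurable.mul hh)
  simp only [Pi.mul_apply, ← mul_assoc, mul_pow, sq (decay _ _), hhalf] at hcs
  exact hcs.trans (mul_le_mul' (lintegral_Ioc_decay_sub_le hμ a b) le_rfl)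

/-- `y` solves `dy/dt - νΔy = g` on `(0, T]`, Fourier coefficient by Fourier coefficient, and its
coefficients are continuous up to `t = 0`. The Navier–Stokes equations and their linearisation are
both read as such forced heat equations. -/
structure IsForcedHeat (ν T : ℝ) (y g : ℝ → Coef) : Prop where
  cont : ∀ k, ContinuousOn (fun t => y t k) (Icc 0 T)
  deriv : ∀ k, ∀ t ∈ Ioc 0 T,
    HasDerivAt (fun s => y s k) (g t k - ((ν * lam k : ℝ) : ℂ) * y t k) t

namespace IsForcedHeat

variable {ν T : ℝ} {y g : ℝ → Coef}

lemma aemeasurable_apply (h : IsForcedHeat ν T y g) (k : Freq) :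
    AEMeasurable (fun t => y t k) (volume.restrict (Ioc 0 T)) :=
  ((h.cont k).mono Ioc_subset_Icc_self).aemeasurable measurableSet_Ioc

lemma aemeasurable_force_apply (h : IsForcedHeat ν T y g) (k : Freq) :
    AEMeasurable (fun t => g t k) (volume.restrict (Ioc 0 T)) := by
  refine AEMeasurable.congr ((measurable_deriv fun s => y s k).aemeasurable.add
    ((h.aemeasurable_apply k).const_mul ((ν * lam k : ℝ) : ℂ))) ?_
  filter_upwards [ae_restrict_mem measurableSet_Ioc] with t ht
  rw [Pi.add_apply, (h.deriv k t ht).deriv, sub_add_cancel]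

lemma aemeasurable_sub_heatS_apply (h : IsForcedHeat ν T y g) (k : Freq) :
    AEMeasurable (fun t => (y t - heatS ν t (y 0)) k) (volume.restrict (Ioc 0 T)) :=
  (h.aemeasurable_apply k).sub (measurable_heatS ν (y 0) k).aemeasurable

lemma enorm_sub_heatS_sq_le (h : IsForcedHeat ν T y g) (hν : 0 < ν) {t₀ t : ℝ} (ht₀ : 0 ≤ t₀)
    (htt : t₀ ≤ t) (htT : t ≤ T) (k : Freq) :
    ‖(y t - heatS ν (t - t₀) (y t₀)) k‖ₑ ^ 2 ≤ ENNReal.ofReal (1 / (ν * lam k)) *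
      ∫⁻ s in Ioc t₀ t, decay (ν * lam k) (t - s) * ‖g s k‖ₑ ^ 2 := by
  have hsub : Ioc t₀ t ⊆ Ioc 0 T := Ioc_subset_Ioc ht₀ htT
  have hduhamel := enorm_sub_exp_mul_le_lintegral_decay_mul htt
    ((h.cont k).mono (Icc_subset_Icc ht₀ htT)) fun x hx => h.deriv k x (hsub hx)
  exact (pow_le_pow_left' hduhamel 2).trans
    (sq_lintegral_decay_mul_le (mul_pos hν (lam_pos k))
      ((h.aemeasurable_force_apply k).enorm.mono_set hsub))

lemma ehSq_sub_heatS_le (h : IsForcedHeat ν T y g) (hν : 0 < ν) {θ : ℝ} (hθ : 0 ≤ θ) (hθ₁ : θ ≤ 1)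
    (σ : ℝ) {t₀ t : ℝ} (ht₀ : 0 ≤ t₀) (htt : t₀ ≤ t) (htT : t ≤ T) :
    ehSq (σ + 1 + θ) (y t - heatS ν (t - t₀) (y t₀)) ≤ ENNReal.ofReal (ν ^ (-(1 + θ))) *
      ∫⁻ s in Ioc t₀ t, ENNReal.ofReal ((t - s) ^ (-θ)) * ehSq σ (g s) := by
  have hkernel (k : Freq) {r : ℝ} (hr : 0 < r) :
      ENNReal.ofReal (lam k ^ (σ + 1 + θ)) * (ENNReal.ofReal (1 / (ν * lam k)) *
        decay (ν * lam k) r) ≤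
      ENNReal.ofReal (ν ^ (-(1 + θ))) *
        (ENNReal.ofReal (r ^ (-θ)) * ENNReal.ofReal (lam k ^ σ)) := by
    have hlam := lam_pos k
    refine (mul_le_mul' le_rfl (mul_le_mul' le_rfl
      (decay_le_rpow (mul_pos (mul_pos hν hlam) hr) hθ hθ₁))).trans_eq ?_
    rw [← ENNReal.ofReal_mul (by positivity), ← ENNReal.ofReal_mul (by positivity),
      ← ENNReal.ofReal_mul (by positivity), ← ENNReal.ofReal_mul (by positivity),
      Real.mul_rpow (by positivity) hr.le, Real.mul_rpow hν.le hlam.le, Real.rpow_add hlam,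
      Real.rpow_add_one hlam.ne', neg_add, Real.rpow_add hν, Real.rpow_neg_one,
      Real.rpow_neg hlam.le]
    field_simp
  have hmeas (k : Freq) : AEMeasurable (fun s => g s k) (volume.restrict (Ioc t₀ t)) :=
    (h.aemeasurable_force_apply k).mono_set (Ioc_subset_Ioc ht₀ htT)
  have hcoeff (k : Freq) :
      ENNReal.ofReal (lam k ^ (σ + 1 + θ)) * ‖(y t - heatS ν (t - t₀) (y t₀)) k‖ₑ ^ 2 ≤
      ENNReal.ofReal (ν ^ (-(1 + θ))) * ∫⁻ s in Ioc t₀ t, ENNReal.ofReal ((t - s) ^ (-θ)) *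
        (ENNReal.ofReal (lam k ^ σ) * ‖g s k‖ₑ ^ 2) := by
    refine (mul_le_mul' le_rfl (h.enorm_sub_heatS_sq_le hν ht₀ htt htT k)).trans ?_
    simp only [← lintegral_const_mul' _ _ ENNReal.ofReal_ne_top, ← restrict_Ioo_eq_restrict_Ioc]
    refine setLIntegral_mono' measurableSet_Ioo fun s hs => ?_
    simpa only [mul_assoc] using mul_le_mul' (hkernel k (sub_pos.mpr hs.2)) (le_refl (‖g s k‖ₑ ^ 2))
  refine (ENNReal.tsum_le_tsum hcoeff).trans_eq ?_
  rw [ENNReal.tsum_mul_left, ← lintegral_tsum]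
  · simp only [ENNReal.tsum_mul_left, ehSq]
  · exact fun k => AEMeasurable.mul (by fun_prop) (((hmeas k).enorm.pow_const 2).const_mul _)

lemma ehSq_sub_heatS_le_lintegral (h : IsForcedHeat ν T y g) (hν : 0 < ν) (σ : ℝ) {t : ℝ}
    (ht : 0 ≤ t) (htT : t ≤ T) :
    ehSq (σ + 1) (y t - heatS ν t (y 0)) ≤
      ENNReal.ofReal (1 / ν) * ∫⁻ s in Ioc 0 t, ehSq σ (g s) := by
  simpa [Real.rpow_neg_one] using h.ehSq_sub_heatS_le hν le_rfl zero_le_one σ le_rfl ht htT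

/-- Maximal regularity in `L²`: Young's inequality applied to each Fourier coefficient. -/
lemma lintegral_ehSq_sub_heatS_le (h : IsForcedHeat ν T y g) (hν : 0 < ν) (σ : ℝ) :
    ∫⁻ t in Ioc 0 T, ehSq (σ + 2) (y t - heatS ν t (y 0)) ≤
      ENNReal.ofReal (1 / ν ^ 2) * ∫⁻ s in Ioc 0 T, ehSq σ (g s) := by
  rw [lintegral_ehSq h.aemeasurable_sub_heatS_apply, lintegral_ehSq h.aemeasurable_force_apply,
    ← ENNReal.tsum_mul_left]
  refine ENNReal.tsum_le_tsum fun k => ?_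
  have hlam := lam_pos k
  have hμ : 0 < ν * lam k := mul_pos hν hlam
  have hmeas := (h.aemeasurable_force_apply k).enorm.pow_const 2
  calc ENNReal.ofReal (lam k ^ (σ + 2)) * ∫⁻ t in Ioc 0 T, ‖(y t - heatS ν t (y 0)) k‖ₑ ^ 2
      ≤ ENNReal.ofReal (lam k ^ (σ + 2)) * ∫⁻ t in Ioc 0 T, ENNReal.ofReal (1 / (ν * lam k)) *
          ∫⁻ s in Ioc 0 t, decay (ν * lam k) (t - s) * ‖g s k‖ₑ ^ 2 := by
        refine mul_le_mul' le_rfl (setLIntegral_mono' measurableSet_Ioc fun t ht => ?_)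
        simpa only [sub_zero] using h.enorm_sub_heatS_sq_le hν le_rfl ht.1.le ht.2 k
    _ ≤ ENNReal.ofReal (lam k ^ (σ + 2)) * (ENNReal.ofReal (1 / (ν * lam k)) *
          (ENNReal.ofReal (1 / (ν * lam k)) * ∫⁻ s in Ioc 0 T, ‖g s k‖ₑ ^ 2)) := by
        rw [lintegral_const_mul' _ _ ENNReal.ofReal_ne_top]
        exact mul_le_mul' le_rfl (mul_le_mul' le_rfl
          ((lintegral_lintegral_Ioc_mul_le (measurable_decay _) hmeas).trans
            (mul_le_mul' (lintegral_Ioc_decay_le hμ T) le_rfl)))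
    _ = ENNReal.ofReal (1 / ν ^ 2) *
          (ENNReal.ofReal (lam k ^ σ) * ∫⁻ s in Ioc 0 T, ‖g s k‖ₑ ^ 2) := by
        simp only [← mul_assoc]
        rw [← ENNReal.ofReal_mul (by positivity), ← ENNReal.ofReal_mul (by positivity),
          ← ENNReal.ofReal_mul (by positivity), Real.rpow_add hlam, Real.rpow_two]
        field_simp

end IsForcedHeat

/-! ### Bounded and continuous trajectories -/

lemma FinH.mono {s s' : ℝ} {c : Coef} (h : FinH s' c) (hs : s ≤ s') : FinH s c :=
  (finH_iff_ehSq_ne_top s c).mpr <|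
    ne_top_of_le_ne_top ((finH_iff_ehSq_ne_top s' c).mp h) (ehSq_mono hs c)

lemma FinH.sub {s : ℝ} {c d : Coef} (hc : FinH s c) (hd : FinH s d) : FinH s (c - d) := by
  rw [finH_iff_ehSq_ne_top] at *
  exact ne_top_of_le_ne_top (by finiteness) (ehSq_sub_le s c d)

lemma FinH.ehSq_eq_ofReal_hN_sq {s : ℝ} {c : Coef} (hc : FinH s c) :
    ehSq s c = ENNReal.ofReal (hN s c ^ 2) := by
  rw [hN, hSq_eq_toReal_ehSq, Real.sq_sqrt ENNReal.toReal_nonneg,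
    ENNReal.ofReal_toReal ((finH_iff_ehSq_ne_top s c).mp hc)]

lemma FinH.waveNum_rpow_mul_norm_le_hN {s : ℝ} {c : Coef} (hc : FinH s c) (k : Freq) :
    waveNum k ^ s * ‖c k‖ ≤ hN s c := by
  refine Real.le_sqrt_of_sq_le ?_
  rw [mul_pow, waveNum_rpow_sq]
  exact hc.le_tsum k fun m _ => lam_rpow_mul_norm_sq_nonneg s c m

/-- `u` is bounded in `Ḣ^s` on the set `S` of times. -/
def BddH (s : ℝ) (S : Set ℝ) (u : ℝ → Coef) : Prop :=
  ∃ M : ℝ≥0, ∀ t ∈ S, ehSq s (u t) ≤ M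

lemma bddH_of_forall_le {s : ℝ} {S : Set ℝ} {u : ℝ → Coef} {C : ℝ≥0∞} (hC : C ≠ ∞)
    (h : ∀ t ∈ S, ehSq s (u t) ≤ C) : BddH s S u :=
  ⟨C.toNNReal, fun t ht => (h t ht).trans_eq (ENNReal.coe_toNNReal hC).symm⟩

lemma FinH.bddH {s : ℝ} {c : Coef} (hc : FinH s c) (S : Set ℝ) : BddH s S fun _ => c :=
  bddH_of_forall_le ((finH_iff_ehSq_ne_top s c).mp hc) fun _ _ => le_rfl

namespace BddH

variable {s : ℝ} {S S' : Set ℝ} {u v : ℝ → Coef}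

lemma finH (h : BddH s S u) {t : ℝ} (ht : t ∈ S) : FinH s (u t) := by
  obtain ⟨M, hM⟩ := h
  exact (finH_iff_ehSq_ne_top s (u t)).mpr (ne_top_of_le_ne_top ENNReal.coe_ne_top (hM t ht))

lemma mono {s' : ℝ} (h : BddH s' S u) (hs : s ≤ s') : BddH s S u := by
  obtain ⟨M, hM⟩ := h
  exact ⟨M, fun t ht => (ehSq_mono hs _).trans (hM t ht)⟩

lemma subset (h : BddH s S' u) (hS : S ⊆ S') : BddH s S u := by
  obtain ⟨M, hM⟩ := h
  exact ⟨M, fun t ht => hM t (hS ht)⟩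

lemma union (h : BddH s S u) (h' : BddH s S' u) : BddH s (S ∪ S') u := by
  obtain ⟨M, hM⟩ := h
  obtain ⟨M', hM'⟩ := h'
  refine ⟨M + M', ?_⟩
  rintro t (ht | ht) <;> push_cast
  · exact le_add_right (hM t ht)
  · exact le_add_left (hM' t ht)

lemma add (h : BddH s S u) (h' : BddH s S v) : BddH s S fun t => u t + v t := by
  obtain ⟨M, hM⟩ := h
  obtain ⟨M', hM'⟩ := h'
  refine ⟨2 * (M + M'), fun t ht => (ehSq_add_le s _ _).trans ?_⟩
  push_cast
  exact mul_le_mul' le_rfl (add_le_add (hM t ht) (hM' t ht))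

lemma neg (h : BddH s S u) : BddH s S fun t => -u t := by
  simpa only [BddH, ehSq_neg] using h

lemma sub (h : BddH s S u) (h' : BddH s S v) : BddH s S fun t => u t - v t := by
  simpa only [sub_eq_add_neg] using h.add h'.neg

lemma of_sub (h : BddH s S fun t => u t - v t) (h' : BddH s S v) : BddH s S u := by
  simpa only [sub_add_cancel] using h.add h'

lemma Bc {τ p q : ℝ} (hu : BddH p S u) (hv : BddH q S v) (hp : τ ≤ p) (hq : τ ≤ q)
    (hpq : 0 ≤ p + q) (hdim : 1 < p + q - τ) :
    BddH (τ - 1) S fun t => Bc (u t) (v t) := by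
  obtain ⟨K, hK⟩ := exists_ehSq_Bc_le hp hq hpq hdim
  obtain ⟨M, hM⟩ := hu
  obtain ⟨M', hM'⟩ := hv
  refine ⟨K * (M * M'), fun t ht => (hK _ _).trans ?_⟩
  push_cast
  exact mul_le_mul' le_rfl (mul_le_mul' (hM t ht) (hM' t ht))

end BddH

/-- `u ∈ C([0,T], Ḣ^s_⋄)`. Finiteness of the norms is required separately, since `hN` takes the
junk value `0` on fields of infinite norm. -/
structure MemCH (s T : ℝ) (u : ℝ → Coef) : Prop where
  finH : ∀ t ∈ Icc 0 T, FinH s (u t)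
  contH : ContH s T u

namespace MemCH

variable {s T : ℝ} {u : ℝ → Coef}

lemma continuousOn_apply (h : MemCH s T u) (k : Freq) :
    ContinuousOn (fun t => u t k) (Icc 0 T) := by
  rw [Metric.continuousOn_iff]
  intro t ht ε hε
  have hpos : 0 < waveNum k ^ s := Real.rpow_pos_of_pos (waveNum_pos k) s
  obtain ⟨δ, hδ, hclose⟩ := h.contH t ht (waveNum k ^ s * ε) (mul_pos hpos hε)
  refine ⟨δ, hδ, fun r hr hrt => ?_⟩
  have hcoeff := ((h.finH r hr).sub (h.finH t ht)).waveNum_rpow_mul_norm_le_hN k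
  rw [dist_eq_norm]
  exact lt_of_mul_lt_mul_left (hcoeff.trans_lt (hclose r hr hrt)) hpos.le

lemma bddH_inter_ball (h : MemCH s T u) {t : ℝ} (ht : t ∈ Icc 0 T) :
    ∃ δ > 0, BddH s (Metric.ball t δ ∩ Icc 0 T) u := by
  obtain ⟨δ, hδ, hclose⟩ := h.contH t ht 1 one_pos
  have hdiff : BddH s (Metric.ball t δ ∩ Icc 0 T) fun r => u r - u t := by
    refine ⟨1, fun r ⟨hrt, hr⟩ => ?_⟩
    rw [((h.finH r hr).sub (h.finH t ht)).ehSq_eq_ofReal_hN_sq, ENNReal.coe_one,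
      ENNReal.ofReal_le_one]
    exact pow_le_one₀ (Real.sqrt_nonneg _) (hclose r hr hrt).le
  exact ⟨δ, hδ, hdiff.of_sub ((h.finH t ht).bddH _)⟩

lemma bddH (h : MemCH s T u) : BddH s (Icc 0 T) u := by
  suffices hinter : BddH s (Icc 0 T ∩ Icc 0 T) u by rwa [inter_self] at hinter
  refine isCompact_Icc.induction_on (p := fun S => BddH s (S ∩ Icc 0 T) u) ⟨0, by simp⟩
    (fun S S' hS h' => h'.subset (inter_subset_inter_left _ hS))
    (fun S S' hS hS' => union_inter_distrib_right S S' _ ▸ hS.union hS') fun t ht => ?_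
  obtain ⟨δ, hδ, hbdd⟩ := h.bddH_inter_ball ht
  exact ⟨_, mem_nhdsWithin_of_mem_nhds (Metric.ball_mem_nhds t hδ), hbdd⟩

end MemCH

/-! ### Gain of regularity -/

lemma bddH_heatS {ν s : ℝ} (hν : 0 < ν) {c : Coef} (hc : FinH s c) (t₀ : ℝ) :
    BddH s (Ici t₀) fun t => heatS ν (t - t₀) c :=
  bddH_of_forall_le ((finH_iff_ehSq_ne_top s c).mp hc) fun _ ht =>
    ehSq_heatS_le hν (sub_nonneg.mpr ht) s c

lemma bddH_heatS_of_lt {ν s : ℝ} (hν : 0 < ν) {c : Coef} (hc : FinH s c) {θ : ℝ} (hθ : 0 ≤ θ)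
    (hθ₁ : θ ≤ 1) {t₀ t₁ : ℝ} (h₀₁ : t₀ < t₁) :
    BddH (s + θ) (Ici t₁) fun t => heatS ν (t - t₀) c := by
  refine bddH_of_forall_le (C := ENNReal.ofReal ((ν * (t₁ - t₀)) ^ (-θ)) * ehSq s c)
    (ENNReal.mul_ne_top ENNReal.ofReal_ne_top ((finH_iff_ehSq_ne_top s c).mp hc)) fun t ht => ?_
  rw [mem_Ici] at ht
  refine (ehSq_heatS_le_rpow_mul hν (by linarith) hθ hθ₁ s c).trans (mul_le_mul' ?_ le_rfl)
  refine ENNReal.ofReal_le_ofReal (Real.rpow_le_rpow_of_nonpos (mul_pos hν (by linarith)) ?_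
    (neg_nonpos.mpr hθ))
  gcongr

namespace IsForcedHeat

variable {ν T : ℝ} {y g : ℝ → Coef}

lemma bddH_sub_heatS (h : IsForcedHeat ν T y g) (hν : 0 < ν) {θ : ℝ} (hθ : 0 ≤ θ) (hθ₁ : θ < 1)
    {σ t₀ : ℝ} (ht₀ : 0 ≤ t₀) (hg : BddH σ (Icc t₀ T) g) :
    BddH (σ + 1 + θ) (Icc t₀ T) fun t => y t - heatS ν (t - t₀) (y t₀) := by
  obtain ⟨M, hM⟩ := hg
  have hkernel : ∫⁻ r in Ioc 0 T, ENNReal.ofReal (r ^ (-θ)) ≠ ∞ :=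
    lintegral_Ioc_rpow_ne_top (by linarith) T
  refine bddH_of_forall_le (C := ENNReal.ofReal (ν ^ (-(1 + θ))) *
    ((∫⁻ r in Ioc 0 T, ENNReal.ofReal (r ^ (-θ))) * M)) (by finiteness) fun t ht => ?_
  refine (h.ehSq_sub_heatS_le hν hθ hθ₁.le σ ht₀ ht.1 ht.2).trans (mul_le_mul' le_rfl ?_)
  calc ∫⁻ s in Ioc t₀ t, ENNReal.ofReal ((t - s) ^ (-θ)) * ehSq σ (g s)
      ≤ ∫⁻ s in Ioc t₀ t, ENNReal.ofReal ((t - s) ^ (-θ)) * M :=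
        setLIntegral_mono' measurableSet_Ioc fun s hs =>
          mul_le_mul' le_rfl (hM s ⟨hs.1.le, hs.2.trans ht.2⟩)
    _ = (∫⁻ r in Ioc 0 (t - t₀), ENNReal.ofReal (r ^ (-θ))) * M := by
        rw [lintegral_mul_const _ (by fun_prop),
          setLIntegral_Ioc_comp_sub_left fun r => ENNReal.ofReal (r ^ (-θ))]
    _ ≤ (∫⁻ r in Ioc 0 T, ENNReal.ofReal (r ^ (-θ))) * M :=
        mul_le_mul' (lintegral_mono_set (Ioc_subset_Ioc_right (by linarith [ht.2]))) le_rfl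

lemma bddH_Icc_zero (h : IsForcedHeat ν T y g) (hν : 0 < ν) {θ : ℝ} (hθ : 0 ≤ θ) (hθ₁ : θ < 1)
    {s : ℝ} (h0 : FinH s (y 0)) (hg : BddH (s - 1 - θ) (Icc 0 T) g) : BddH s (Icc 0 T) y := by
  have hsub := h.bddH_sub_heatS hν hθ hθ₁ le_rfl hg
  rw [show s - 1 - θ + 1 + θ = s by ring] at hsub
  exact hsub.of_sub ((bddH_heatS hν h0 0).subset Icc_subset_Ici_self)

lemma bddH_Icc_of_lt (h : IsForcedHeat ν T y g) (hν : 0 < ν) {θ : ℝ} (hθ : 0 ≤ θ) (hθ₁ : θ < 1)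
    {s t₀ t₁ : ℝ} (ht₀ : 0 ≤ t₀) (h₀₁ : t₀ < t₁) (h0 : FinH s (y t₀))
    (hg : BddH (s - 1) (Icc t₀ T) g) : BddH (s + θ) (Icc t₁ T) y := by
  have hsub := (h.bddH_sub_heatS hν hθ hθ₁ ht₀ hg).subset (Icc_subset_Icc_left h₀₁.le)
  rw [sub_add_cancel] at hsub
  exact hsub.of_sub ((bddH_heatS_of_lt hν h0 hθ hθ₁.le h₀₁).subset Icc_subset_Ici_self)

end IsForcedHeat

/-! ### Perturbations of order one of the heat equation -/

namespace IsForcedHeat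

variable {ν T : ℝ} {y g : ℝ → Coef}

lemma ehSq_le (h : IsForcedHeat ν T y g) (hν : 0 < ν) (a : ℝ) {t : ℝ} (ht : t ∈ Ioc 0 T) :
    ehSq a (y t) ≤ 2 * (ENNReal.ofReal (1 / ν) * (∫⁻ s in Ioc 0 t, ehSq (a - 1) (g s)) +
      ehSq a (y 0)) := by
  have hsub := h.ehSq_sub_heatS_le_lintegral hν (a - 1) ht.1.le ht.2
  rw [sub_add_cancel] at hsub
  exact (ehSq_le_sub_add a (y t) (heatS ν t (y 0))).trans
    (mul_le_mul' le_rfl (add_le_add hsub (ehSq_heatS_le hν ht.1.le a (y 0))))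

lemma lintegral_ehSq_add_one_le (h : IsForcedHeat ν T y g) (hν : 0 < ν) (a : ℝ) :
    ∫⁻ t in Ioc 0 T, ehSq (a + 1) (y t) ≤
      2 * (ENNReal.ofReal (1 / ν ^ 2) * (∫⁻ t in Ioc 0 T, ehSq (a - 1) (g t)) +
        ENNReal.ofReal (1 / ν) * ehSq a (y 0)) := by
  have hmaxreg := h.lintegral_ehSq_sub_heatS_le hν (a - 1)
  rw [show a - 1 + 2 = a + 1 by ring] at hmaxreg
  refine (lintegral_mono fun t => ehSq_le_sub_add (a + 1) (y t) (heatS ν t (y 0))).trans ?_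
  rw [lintegral_const_mul' _ _ ENNReal.ofNat_ne_top,
    lintegral_add_left' (aemeasurable_ehSq h.aemeasurable_sub_heatS_apply _)]
  exact mul_le_mul' le_rfl (add_le_add hmaxreg (lintegral_ehSq_heatS_le hν T a (y 0)))

end IsForcedHeat

lemma setLIntegral_ehSq_le_mul {T σ s : ℝ} {y g : ℝ → Coef} {K : ℝ≥0}
    (hg : ∀ t ∈ Ioc 0 T, ehSq σ (g t) ≤ K * ehSq s (y t)) {t : ℝ} (ht : t ≤ T) :
    ∫⁻ r in Ioc 0 t, ehSq σ (g r) ≤ K * ∫⁻ r in Ioc 0 t, ehSq s (y r) := by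
  rw [← lintegral_const_mul' _ _ ENNReal.coe_ne_top]
  exact setLIntegral_mono' measurableSet_Ioc fun r hr => hg r ⟨hr.1, hr.2.trans ht⟩

lemma exists_ehSq_le_of_isForcedHeat {ν : ℝ} (hν : 0 < ν) (T a : ℝ) (K : ℝ≥0) :
    ∃ G : ℝ≥0, ∀ y g : ℝ → Coef, IsForcedHeat ν T y g → BddH a (Ioc 0 T) y →
      (∀ t ∈ Ioc 0 T, ehSq (a - 1) (g t) ≤ K * ehSq a (y t)) →
      ∀ t ∈ Ioc 0 T, ehSq a (y t) ≤ G * ehSq a (y 0) := by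
  set Q : ℝ≥0 := 2 * ((1 / ν).toNNReal * K)
  refine ⟨(Real.exp ((2 * Q + 1) * T)).toNNReal * 4, fun y g h ⟨M, hM⟩ hg t ht => ?_⟩
  have hgronwall := le_two_mul_exp_of_le_add_lintegral (K := Q) (A := 2 * ehSq a (y 0)) hM
    fun t ht => calc
      ehSq a (y t) ≤ 2 * (ENNReal.ofReal (1 / ν) * (K * ∫⁻ s in Ioc 0 t, ehSq a (y s)) +
          ehSq a (y 0)) :=
        (h.ehSq_le hν a ht).trans (mul_le_mul' le_rfl
          (add_le_add_left (mul_le_mul' le_rfl (setLIntegral_ehSq_le_mul hg ht.2)) _))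
      _ = 2 * ehSq a (y 0) + Q * ∫⁻ s in Ioc 0 t, ehSq a (y s) := by
        simp only [Q, ENNReal.coe_mul, ENNReal.coe_ofNat, ENNReal.ofReal]
        ring
  refine (hgronwall t ht).trans_eq ?_
  simp only [ENNReal.coe_mul, ENNReal.coe_ofNat, ENNReal.ofReal]
  ring

lemma exists_lintegral_ehSq_le_of_isForcedHeat {ν : ℝ} (hν : 0 < ν) (T a : ℝ) (K : ℝ≥0) :
    ∃ C : ℝ≥0, ∀ y g : ℝ → Coef, IsForcedHeat ν T y g → BddH a (Ioc 0 T) y →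
      (∀ t ∈ Ioc 0 T, ehSq (a - 1) (g t) ≤ K * ehSq a (y t)) →
      ∫⁻ t in Ioc 0 T, ehSq (a + 1) (y t) ≤ C * ehSq a (y 0) := by
  obtain ⟨G, hG⟩ := exists_ehSq_le_of_isForcedHeat hν T a K
  refine ⟨2 * ((1 / ν ^ 2).toNNReal * (K * (G * T.toNNReal)) + (1 / ν).toNNReal),
    fun y g h hy hg => ?_⟩
  have hint : ∫⁻ t in Ioc 0 T, ehSq a (y t) ≤ G * ehSq a (y 0) * ENNReal.ofReal T :=
    (setLIntegral_mono' measurableSet_Ioc (hG y g h hy hg)).trans_eq (by simp)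
  calc ∫⁻ t in Ioc 0 T, ehSq (a + 1) (y t)
      ≤ 2 * (ENNReal.ofReal (1 / ν ^ 2) * (K * (G * ehSq a (y 0) * ENNReal.ofReal T)) +
          ENNReal.ofReal (1 / ν) * ehSq a (y 0)) :=
        (h.lintegral_ehSq_add_one_le hν a).trans (mul_le_mul' le_rfl (add_le_add_left
          (mul_le_mul' le_rfl ((setLIntegral_ehSq_le_mul hg le_rfl).trans
            (mul_le_mul' le_rfl hint))) _))
    _ = _ := by
        simp only [ENNReal.coe_mul, ENNReal.coe_add, ENNReal.coe_ofNat, ENNReal.ofReal]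
        ring

/-- A force of order one in `y` is estimated twice: by Grönwall it keeps `y` in
`L²([0,T], Ḣ^{a+1})`, hence it lies in `L²([0,T], Ḣ^a)` itself, and maximal regularity gains two
derivatives on it. -/
lemma exists_lintegral_ehSq_sub_heatS_le_of_isForcedHeat {ν : ℝ} (hν : 0 < ν) (T a : ℝ)
    (K K' : ℝ≥0) :
    ∃ C : ℝ≥0, ∀ y g : ℝ → Coef, IsForcedHeat ν T y g → BddH a (Ioc 0 T) y →
      (∀ t ∈ Ioc 0 T, ehSq (a - 1) (g t) ≤ K * ehSq a (y t)) →
      (∀ t ∈ Ioc 0 T, ehSq a (g t) ≤ K' * ehSq (a + 1) (y t)) →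
      ∫⁻ t in Ioc 0 T, ehSq (a + 2) (y t - heatS ν t (y 0)) ≤ C * ehSq a (y 0) := by
  obtain ⟨C, hC⟩ := exists_lintegral_ehSq_le_of_isForcedHeat hν T a K
  refine ⟨(1 / ν ^ 2).toNNReal * (K' * C), fun y g h hy hg hg' => ?_⟩
  calc ∫⁻ t in Ioc 0 T, ehSq (a + 2) (y t - heatS ν t (y 0))
      ≤ ENNReal.ofReal (1 / ν ^ 2) * (K' * (C * ehSq a (y 0))) :=
        (h.lintegral_ehSq_sub_heatS_le hν a).trans (mul_le_mul' le_rfl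
          ((setLIntegral_ehSq_le_mul hg' le_rfl).trans (mul_le_mul' le_rfl (hC y g h hy hg))))
    _ = _ := by
        simp only [ENNReal.coe_mul, ENNReal.ofReal]
        ring

/-! ### Regularity of the Navier–Stokes trajectory -/

/-- The Navier–Stokes equations read as a heat equation with force `f - B[u,u]`. -/
def nsForce (f : Coef) (u : ℝ → Coef) : ℝ → Coef := fun t => f - Bc (u t) (u t)

lemma BddH.nsForce {S : Set ℝ} {p τ : ℝ} {f : Coef} {u : ℝ → Coef} (hu : BddH p S u)
    (hf : FinH (τ - 1) f) (hp : 0 ≤ p) (hτ : τ ≤ p) (hdim : 1 < 2 * p - τ) :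
    BddH (τ - 1) S (nsForce f u) :=
  (hf.bddH S).sub (hu.Bc hu hτ hτ (by linarith) (by linarith))

namespace IsNSSol

variable {ν T b : ℝ} {θ f : Coef} {u : ℝ → Coef}

lemma memCH (h : IsNSSol ν f T θ u) (hθ : FinH 1 θ) : MemCH 1 T u where
  finH t ht := by
    rcases ht.1.eq_or_lt with rfl | hpos
    · rwa [h.init]
    · exact (h.memL2H2.1 t ⟨hpos, ht.2⟩).2.mono one_le_two
  contH := h.contH1

lemma isForcedHeat (h : IsNSSol ν f T θ u) (hθ : FinH 1 θ) :
    IsForcedHeat ν T u (nsForce f u) where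
  cont := (h.memCH hθ).continuousOn_apply
  deriv k t ht := by
    rw [nsForce, Pi.sub_apply, sub_right_comm]
    exact h.deriv k t ht

/-- By the product estimate, `u ∈ Ḣ^s` puts the force in `Ḣ^{s-3/2}`; of the two derivatives
gained by the heat semigroup, `7/4` are available with bounds that are uniform in time. -/
lemma bddH_of_le_add (h : IsNSSol ν f T θ u) (hν : 0 < ν) {s s' : ℝ} (hs : 1 ≤ s)
    (hs' : s' ≤ s + 1 / 4) (hθ₁ : FinH 1 θ) (hθ : FinH s' θ) (hf : FinH (s - 3 / 2) f)
    (hu : BddH s (Icc 0 T) u) : BddH s' (Icc 0 T) u := by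
  have hforce : BddH (s - 1 / 2 - 1) (Icc 0 T) (nsForce f u) :=
    hu.nsForce (hf.mono (by linarith)) (by linarith) (by linarith) (by linarith)
  exact (h.isForcedHeat hθ₁).bddH_Icc_zero hν (θ := 3 / 4) (by norm_num) (by norm_num)
    (by rwa [h.init]) (hforce.mono (by linarith))

lemma bddH (h : IsNSSol ν f T θ u) (hν : 0 < ν) (hb : 1 ≤ b) (hθ : FinH b θ)
    (hf : FinH (b - 1) f) : BddH b (Icc 0 T) u := by
  have hθ₁ : FinH 1 θ := hθ.mono hb
  have hladder (n : ℕ) : ∀ s ≤ b, s ≤ 1 + n / 4 → BddH s (Icc 0 T) u := by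
    induction n with
    | zero => exact fun s _ hs => (h.memCH hθ₁).bddH.mono (by simpa using hs)
    | succ n ih =>
      intro s hsb hsn
      push_cast at hsn
      have : (0 : ℝ) ≤ n := n.cast_nonneg
      have hle : max 1 (s - 1 / 4) ≤ b := max_le hb (by linarith)
      refine h.bddH_of_le_add hν (le_max_left 1 (s - 1 / 4)) ?_ hθ₁ (hθ.mono hsb)
        (hf.mono (by linarith)) (ih _ hle (max_le (by linarith) (by linarith)))
      linarith [le_max_right 1 (s - 1 / 4)]
  obtain ⟨n, hn⟩ := exists_nat_ge (4 * (b - 1))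
  exact hladder n b le_rfl (by linarith)

lemma bddH_Icc_of_pos (h : IsNSSol ν f T θ u) (hν : 0 < ν) (hb : 1 < b) (hθ : FinH b θ)
    (hf : FinH (b - 1) f) {t : ℝ} (ht : 0 < t) : BddH (b + 1 / 4) (Icc t T) u :=
  (h.isForcedHeat (hθ.mono hb.le)).bddH_Icc_of_lt hν (by norm_num) (by norm_num) le_rfl ht
    (by rwa [h.init])
    ((h.bddH hν hb.le hθ hf).nsForce hf (by linarith) le_rfl (by linarith))

end IsNSSol

/-! ### The linearised flow -/

/-- The linearised equation read as a heat equation with force `-(B[u,U] + B[U,u])`. -/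
def linForce (u U : ℝ → Coef) : ℝ → Coef := fun t => -(Bc (u t) (U t) + Bc (U t) (u t))

lemma exists_ehSq_linForce_le {p s : ℝ} {S : Set ℝ} {u : ℝ → Coef} (hp : 1 < p) (hps : -p ≤ s)
    (hsp : s ≤ p) (hu : BddH p S u) :
    ∃ K : ℝ≥0, ∀ U : ℝ → Coef, ∀ t ∈ S,
      ehSq (s - 1) (linForce u U t) ≤ K * ehSq s (U t) := by
  obtain ⟨M, hM⟩ := hu
  obtain ⟨K, hK⟩ := exists_ehSq_Bc_le (p := p) (q := s) hsp le_rfl (by linarith) (by linarith)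
  obtain ⟨K', hK'⟩ := exists_ehSq_Bc_le (p := s) (q := p) le_rfl hsp (by linarith) (by linarith)
  refine ⟨2 * (K + K') * M, fun U t ht => ?_⟩
  rw [linForce, ehSq_neg]
  calc ehSq (s - 1) (Bc (u t) (U t) + Bc (U t) (u t))
      ≤ 2 * (K * (ehSq p (u t) * ehSq s (U t)) + K' * (ehSq s (U t) * ehSq p (u t))) :=
        (ehSq_add_le _ _ _).trans (mul_le_mul' le_rfl (add_le_add (hK _ _) (hK' _ _)))
    _ = 2 * (K + K') * ehSq p (u t) * ehSq s (U t) := by ring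
    _ ≤ _ := by
        push_cast
        exact mul_le_mul' (mul_le_mul' le_rfl (hM t ht)) le_rfl

lemma BddH.linForce {p s : ℝ} {S : Set ℝ} {u U : ℝ → Coef} (hu : BddH p S u)
    (hU : BddH s S U) (hp : 1 < p) (hps : -p ≤ s) (hsp : s ≤ p) :
    BddH (s - 1) S (linForce u U) := by
  obtain ⟨K, hK⟩ := exists_ehSq_linForce_le hp hps hsp hu
  obtain ⟨M, hM⟩ := hU
  refine ⟨K * M, fun t ht => (hK U t ht).trans ?_⟩
  push_cast
  exact mul_le_mul' le_rfl (hM t ht)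

namespace IsForcedHeat

variable {ν T : ℝ} {u U : ℝ → Coef}

lemma bddH_Icc_add_of_linForce (h : IsForcedHeat ν T U (linForce u U)) (hν : 0 < ν) {p s θ : ℝ}
    (hp : 1 < p) (hps : -p ≤ s) (hsp : s ≤ p) (hθ : 0 ≤ θ) (hθ₁ : θ < 1)
    (hu : ∀ t > 0, BddH p (Icc t T) u) (hU : ∀ t > 0, BddH s (Icc t T) U) :
    ∀ t > 0, BddH (s + θ) (Icc t T) U := by
  intro t ht
  have ht₂ : 0 < t / 2 := half_pos ht
  rcases le_or_gt (t / 2) T with htT | hTt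
  · exact h.bddH_Icc_of_lt hν hθ hθ₁ ht₂.le (half_lt_self ht)
      ((hU _ ht₂).finH (left_mem_Icc.mpr htT)) ((hu _ ht₂).linForce (hU _ ht₂) hp hps hsp)
  · rw [Icc_eq_empty (by linarith)]
    exact ⟨0, fun _ => False.elim⟩

lemma bddH_Icc_add_two_of_linForce (h : IsForcedHeat ν T U (linForce u U)) (hν : 0 < ν)
    {a b : ℝ} (hb : 1 < b) (hba : -b ≤ a) (hab : a + 1 ≤ b)
    (hu : ∀ t > 0, BddH (b + 1 / 4) (Icc t T) u) (hU : ∀ t > 0, BddH a (Icc t T) U) :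
    ∀ t > 0, BddH (a + 2) (Icc t T) U := by
  have hgain {s : ℝ} (θ : ℝ) (has : a ≤ s) (hsb : s ≤ b + 1 / 4) (hθ : 0 ≤ θ) (hθ₁ : θ < 1) :=
    h.bddH_Icc_add_of_linForce hν (p := b + 1 / 4) (s := s) (by linarith) (by linarith) hsb
      hθ hθ₁ hu
  have h₁ := hgain (3 / 4) le_rfl (by linarith) (by norm_num) (by norm_num) hU
  have h₂ := hgain (1 / 2) (by linarith) (by linarith) (by norm_num) (by norm_num) h₁
  have h₃ := hgain (3 / 4) (by linarith) (by linarith) (by norm_num) (by norm_num) h₂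
  exact fun t ht => (h₃ t ht).mono (by linarith)

end IsForcedHeat

namespace IsLinSol

variable {ν T a : ℝ} {ξ : Coef} {u U : ℝ → Coef}

lemma isForcedHeat (h : IsLinSol ν u T ξ U) (hU : MemCH a T U) :
    IsForcedHeat ν T U (linForce u U) where
  cont := hU.continuousOn_apply
  deriv k t ht := by
    convert h.deriv k t ht using 1
    simp only [linForce, Pi.neg_apply, Pi.add_apply, Pi.zero_apply]
    ring

end IsLinSol

lemma exists_lintegral_ehSq_linSol_sub_heatS_le {ν a b T : ℝ} {u : ℝ → Coef} (hν : 0 < ν)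
    (hb : 1 < b) (hba : -b ≤ a) (hab : a + 1 ≤ b) (hu : BddH b (Icc 0 T) u) :
    ∃ C : ℝ≥0, ∀ (ξ : Coef) (U : ℝ → Coef), IsLinSol ν u T ξ U → MemCH a T U →
      ∫⁻ t in Ioc 0 T, ehSq (a + 2) (U t - heatS ν t ξ) ≤ C * ehSq a ξ := by
  obtain ⟨K, hK⟩ := exists_ehSq_linForce_le hb hba (by linarith) hu
  obtain ⟨K', hK'⟩ := exists_ehSq_linForce_le (s := a + 1) hb (by linarith) hab hu
  rw [add_sub_cancel_right] at hK'
  obtain ⟨C, hC⟩ := exists_lintegral_ehSq_sub_heatS_le_of_isForcedHeat hν T a K K'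
  refine ⟨C, fun ξ U hU hUc => ?_⟩
  rw [← hU.init]
  exact hC U _ (hU.isForcedHeat hUc) (hUc.bddH.subset Ioc_subset_Icc_self)
    (fun t ht => hK U t (Ioc_subset_Icc_self ht)) fun t ht => hK' U t (Ioc_subset_Icc_self ht)

/-! ### Conclusion -/

lemma heatS_add (ν t r : ℝ) (c : Coef) : heatS ν (t + r) c = heatS ν t (heatS ν r c) := by
  ext k
  simp only [heatS]
  rw [← mul_assoc, ← Complex.ofReal_mul, ← Real.exp_add, ← neg_add, ← mul_add]

lemma FinH.heatS_of_pos {ν s t : ℝ} {c : Coef} (hc : FinH s c) (hν : 0 < ν) (ht : 0 < t)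
    (s' : ℝ) : FinH s' (heatS ν t c) := by
  have hgain (n : ℕ) : ∀ t > 0, FinH (s + n) (heatS ν t c) := by
    induction n with
    | zero =>
      intro t ht
      simpa using (bddH_heatS hν hc 0).finH (mem_Ici.mpr ht.le)
    | succ n ih =>
      intro t ht
      have hstep := (bddH_heatS_of_lt hν (ih (t / 2) (half_pos ht)) zero_le_one le_rfl
        (half_pos ht)).finH self_mem_Ici
      rwa [sub_zero, ← heatS_add, add_halves, add_assoc, ← Nat.cast_succ] at hstep
  obtain ⟨n, hn⟩ := exists_nat_ge (s' - s)
  exact (hgain n t ht).mono (by linarith)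

lemma IsReal.heatS {c : Coef} (hc : IsReal c) (ν t : ℝ) : IsReal (heatS ν t c) := fun k => by
  simp only [NS2D.heatS, lam_fneg, hc k, map_mul, Complex.conj_ofReal, mul_neg]

lemma IsReal.sub {c d : Coef} (hc : IsReal c) (hd : IsReal d) : IsReal (c - d) := fun k => by
  rw [Pi.sub_apply, Pi.sub_apply, hc k, hd k, map_sub, neg_sub_neg, neg_sub]

lemma integrableOn_hSq {S : Set ℝ} {s : ℝ} {w : ℝ → Coef}
    (hw : ∀ k, AEMeasurable (fun t => w t k) (volume.restrict S))
    (hfin : ∫⁻ t in S, ehSq s (w t) ≠ ∞) : IntegrableOn (fun t => hSq s (w t)) S := by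
  simp only [hSq_eq_toReal_ehSq]
  exact integrable_toReal_of_lintegral_ne_top (aemeasurable_ehSq hw s) hfin

lemma sqrt_setIntegral_hSq_le {S : Set ℝ} {r s : ℝ} {w : ℝ → Coef} {c : Coef} {C : ℝ≥0}
    (hw : ∀ k, AEMeasurable (fun t => w t k) (volume.restrict S)) (hc : FinH r c)
    (hle : ∫⁻ t in S, ehSq s (w t) ≤ C * ehSq r c) :
    Real.sqrt (∫ t in S, hSq s (w t)) ≤ Real.sqrt C * hN r c := by
  have htop : C * ehSq r c ≠ ∞ :=
    ENNReal.mul_ne_top ENNReal.coe_ne_top ((finH_iff_ehSq_ne_top r c).mp hc)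
  have hmeas := aemeasurable_ehSq hw s
  rw [hN, ← Real.sqrt_mul C.coe_nonneg]
  refine Real.sqrt_le_sqrt ?_
  simp only [hSq_eq_toReal_ehSq]
  rw [integral_toReal hmeas (ae_lt_top' hmeas (ne_top_of_le_ne_top htop hle)),
    ← ENNReal.coe_toReal C, ← ENNReal.toReal_mul]
  exact ENNReal.toReal_mono htop hle

namespace IsLinSol

variable {ν T a b : ℝ} {θ f ξ : Coef} {u U : ℝ → Coef}

lemma memH_sub_heatS (hU : IsLinSol ν u T ξ U) (hUc : MemCH a T U) (hu : IsNSSol ν f T θ u)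
    (hν : 0 < ν) (hb : 1 < b) (hba : -b ≤ a) (hab : a + 1 ≤ b) (hθ : FinH b θ)
    (hf : FinH (b - 1) f) {t : ℝ} (ht : t ∈ Ioc 0 T) : MemH (a + 2) (U t - heatS ν t ξ) := by
  have hzero : (0 : ℝ) ∈ Icc 0 T := left_mem_Icc.mpr (ht.1.le.trans ht.2)
  have hbdd := (hU.isForcedHeat hUc).bddH_Icc_add_two_of_linForce hν hb hba hab
    (fun r hr => hu.bddH_Icc_of_pos hν hb hθ hf hr)
    fun r hr => hUc.bddH.subset (Icc_subset_Icc_left hr.le)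
  rw [← hU.init]
  exact ⟨(hU.real t (Ioc_subset_Icc_self ht)).sub ((hU.real 0 hzero).heatS ν t),
    ((hbdd t ht.1).finH (left_mem_Icc.mpr ht.2)).sub ((hUc.finH 0 hzero).heatS_of_pos hν ht.1 _)⟩

end IsLinSol

theorem statement16_general {a b T ν : ℝ} (hT : 0 < T) (hν : 0 < ν) (hb : 1 < b) (hba : -b ≤ a)
    (hab : a + 1 ≤ b) {θ f : Coef} (hθ : FinH b θ) (hf : FinH (b - 1) f) {u : ℝ → Coef}
    (hu : IsNSSol ν f T θ u) :
    ∃ C : ℝ, 0 < C ∧ ∀ (ξ : Coef) (U : ℝ → Coef), IsLinSol ν u T ξ U → MemCH a T U →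
      MemL2H (a + 2) T (fun t => U t - heatS ν t ξ) ∧
      IntervalIntegrable (fun t => hSq (a + 2) (U t - heatS ν t ξ)) volume 0 T ∧
      Real.sqrt (∫ t in (0 : ℝ)..T, hSq (a + 2) (U t - heatS ν t ξ)) ≤ C * hN a ξ := by
  obtain ⟨C, hC⟩ := exists_lintegral_ehSq_linSol_sub_heatS_le hν hb hba hab
    (hu.bddH hν hb.le hθ hf)
  refine ⟨Real.sqrt C + 1, by positivity, fun ξ U hU hUc => ?_⟩
  have hξ : FinH a ξ := hU.init ▸ hUc.finH 0 (left_mem_Icc.mpr hT.le)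
  have hmeas := (hU.isForcedHeat hUc).aemeasurable_sub_heatS_apply
  rw [hU.init] at hmeas
  have hint := integrableOn_hSq hmeas (ne_top_of_le_ne_top
    (ENNReal.mul_ne_top ENNReal.coe_ne_top ((finH_iff_ehSq_ne_top a ξ).mp hξ)) (hC ξ U hU hUc))
  refine ⟨⟨fun t ht => hU.memH_sub_heatS hUc hu hν hb hba hab hθ hf ht, hint⟩,
    (intervalIntegrable_iff_integrableOn_Ioc_of_le hT.le).mpr hint, ?_⟩
  rw [intervalIntegral.integral_of_le hT.le]
  exact (sqrt_setIntegral_hSq_le hmeas hξ (hC ξ U hU hUc)).trans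
    (mul_le_mul_of_nonneg_right (le_add_of_nonneg_right zero_le_one) (Real.sqrt_nonneg _))

end NS2D

namespace NS2D

/-- Lemma `LemDiffUI`. For `a ∈ ℤ` and
`b = max{2, |a|+1}`, if `θ ∈ Ḣ^b_⋄` and `f ∈ Ḣ^{b−1}_⋄`, then the difference
`𝕀_θ − ℒ` between the linearised Navier–Stokes flow and the heat flow maps
`Ḣ^a_⋄` continuously into `L²([0,T], Ḣ^{a+2}_⋄)`: there is `C > 0` such that
for every `ξ ∈ Ḣ^a_⋄`, the trajectory `t ↦ 𝕀_θ[ξ](t) − S_t[ξ]` lies in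
`L²([0,T], Ḣ^{a+2}_⋄)` with
`‖𝕀_θ[ξ] − ℒ[ξ]‖_{L²([0,T],Ḣ^{a+2})} ≤ C ‖ξ‖_{Ḣ^a}`. -/
theorem statement16 (a : ℤ) (T ν : ℝ) (hT : 0 < T) (hν : 0 < ν)
    (θ f : Coef)
    (hθ : MemH ((max 2 (|a| + 1) : ℤ) : ℝ) θ)
    (hf : MemH (((max 2 (|a| + 1) : ℤ) : ℝ) - 1) f)
    (uθ : ℝ → Coef) (huθ : IsNSSol ν f T θ uθ) :
    ∃ C : ℝ, 0 < C ∧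
      ∀ (ξ : Coef) (U : ℝ → Coef), MemH (a : ℝ) ξ → IsLinSol ν uθ T ξ U →
        ContH (a : ℝ) T U → MemL2H ((a : ℝ) + 1) T U →
        MemL2H ((a : ℝ) + 2) T (fun t => U t - heatS ν t ξ) ∧
        IntervalIntegrable (fun t => hSq ((a : ℝ) + 2) (U t - heatS ν t ξ)) volume 0 T ∧
        Real.sqrt (∫ t in (0:ℝ)..T, hSq ((a : ℝ) + 2) (U t - heatS ν t ξ)) ≤
          C * hN (a : ℝ) ξ := by
  have hb : (1 : ℝ) < (max 2 (|a| + 1) : ℤ) := by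
    exact_mod_cast one_lt_two.trans_le (le_max_left 2 (|a| + 1))
  have hab : |(a : ℝ)| + 1 ≤ (max 2 (|a| + 1) : ℤ) := by
    exact_mod_cast le_max_right 2 (|a| + 1)
  obtain ⟨C, hC, hbound⟩ := statement16_general (a := (a : ℝ)) hT hν hb
    (by linarith [neg_abs_le (a : ℝ)]) (by linarith [le_abs_self (a : ℝ)]) hθ.2 hf.2 huθ
  refine ⟨C, hC, fun ξ U hξ hU hcont hL2 => hbound ξ U hU ⟨fun t ht => ?_, hcont⟩⟩
  rcases ht.1.eq_or_lt with rfl | hpos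
  · exact hU.init ▸ hξ.2
  · exact (hL2.1 t ⟨hpos, ht.2⟩).2.mono (by linarith)

end NS2D
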